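/- arXiv:1805.03288 — 4 statements merged into one kernel-verified Lean document; each statement's English description precedes it below -/
import Mathlib

section
/- Fix an integer n ≥ 1, a real λ > 1/(2n), and positive reals s₁,...,s_{n+1}. Define G : ℝ^{n+1} → ℝ by G(c) = −(1/(2n)) Σ_{i=1}^{n} (cᵢ + c_{i+1}) + (λ − 1/(2n)) Σ_{i=1}^{n} |cᵢ − c_{i+1}| + Σ_{i=1}^{n+1} sᵢ e^{cᵢ}, and define H : (0,∞)^{n+1} → ℝ by H(z) = (1/2) Σ_{i=1}^{n+1} sᵢ zᵢ² + Σ_{i=1}^{n+1} wᵢ zᵢ + (λ − 1/(2n)) Σ_{i=1}^{n} |zᵢ − z_{i+1}|, where w₁ = w_{n+1} = −1/(2n) and wᵢ = −1/n for 2 ≤ i ≤ n. Then ĉ ∈ ℝ^{n+1} minimizes G over ℝ^{n+1} if and only if ẑ = (e^{ĉ₁},...,e^{ĉ_{n+1}}) minimizes H over (0,∞)^{n+1}. -/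
/-!
Both objectives are convex, so a point is a minimizer exactly when every one-sided directional
derivative there is nonnegative. Each `cᵢ` occurs in the linear part of `G` with the coefficient
`wᵢ` of `H`, so the smooth part of `G` has derivative `∑ i, (wᵢ + sᵢ exp cᵢ) dᵢ` at `c` along `d`,
and that of `H` has derivative `∑ i, (wᵢ + sᵢ zᵢ) dᵢ` at `z`; they agree at `z = exp c`. The
directional derivative of `|xᵢ - xⱼ|` depends on `x` only through the sign of `xᵢ - xⱼ`, which the
strictly increasing exponential preserves.
-/

open Set Filter Topology

section FirstOrderCondition

variable {E : Type*} [AddCommGroup E] [Module ℝ E] {F : E → ℝ} {S : Set E} {x : E}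

theorem rightDeriv_nonneg_of_isLocalMin [TopologicalSpace E] [ContinuousAdd E] [ContinuousSMul ℝ E]
    {d : E} {D : ℝ} (hmin : IsLocalMin F x)
    (hD : HasDerivWithinAt (fun t : ℝ => F (x + t • d)) D (Ioi 0) 0) : 0 ≤ D := by
  have hline : Tendsto (fun t : ℝ => x + t • d) (𝓝[>] 0) (𝓝 x) := by
    have hcont : ContinuousAt (fun t : ℝ => x + t • d) 0 := by fun_prop
    simpa using hcont.tendsto.mono_left nhdsWithin_le_nhds
  refine ge_of_tendsto ((hasDerivWithinAt_iff_tendsto_slope' self_notMem_Ioi).mp hD) ?_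
  filter_upwards [hline.eventually hmin, self_mem_nhdsWithin] with t hle ht
  rw [slope_def_field, zero_smul, add_zero, sub_zero]
  exact div_nonneg (sub_nonneg.mpr hle) (le_of_lt ht)

theorem rightDeriv_le_sub_of_convexOn {y : E} {D : ℝ} (hF : ConvexOn ℝ S F) (hx : x ∈ S)
    (hy : y ∈ S) (hD : HasDerivWithinAt (fun t : ℝ => F (x + t • (y - x))) D (Ioi 0) 0) :
    D ≤ F y - F x := by
  have hline : ⇑(AffineMap.lineMap x y : ℝ →ᵃ[ℝ] E) = fun t : ℝ => x + t • (y - x) := by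
    ext t
    rw [AffineMap.lineMap_apply_module', add_comm]
  have hconv := hF.comp_affineMap (AffineMap.lineMap x y : ℝ →ᵃ[ℝ] E)
  rw [hline] at hconv
  simpa [slope_def_field] using
    hconv.le_slope_of_hasDerivWithinAt_Ioi (by simpa) (by simpa) zero_lt_one hD

theorem isMinOn_iff_rightDeriv_nonneg [TopologicalSpace E] [ContinuousAdd E] [ContinuousSMul ℝ E]
    {D : E → ℝ} (hF : ConvexOn ℝ S F) (hS : S ∈ 𝓝 x)
    (hD : ∀ d, HasDerivWithinAt (fun t : ℝ => F (x + t • d)) (D d) (Ioi 0) 0) :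
    IsMinOn F S x ↔ ∀ d, 0 ≤ D d := by
  refine ⟨fun hmin d => rightDeriv_nonneg_of_isLocalMin (hmin.isLocalMin hS) (hD d),
    fun hnonneg => isMinOn_iff.mpr fun y hy => sub_nonneg.mp ?_⟩
  exact (hnonneg (y - x)).trans
    (rightDeriv_le_sub_of_convexOn hF (mem_of_mem_nhds hS) hy (hD (y - x)))

theorem convexOn_sum {α : Type*} (t : Finset α) {f : α → E → ℝ} (hS : Convex ℝ S)
    (hf : ∀ i ∈ t, ConvexOn ℝ S (f i)) : ConvexOn ℝ S fun x => ∑ i ∈ t, f i x := by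
  simpa only [Finset.sum_fn] using
    Finset.sum_induction f (ConvexOn ℝ S) (fun _ _ => ConvexOn.add) (convexOn_const 0 hS) hf

end FirstOrderCondition

section AbsDirDeriv

/-- The one-sided directional derivative of `|·|` at `a` in the direction `b`. -/
noncomputable def absDirDeriv (a b : ℝ) : ℝ :=
  if a = 0 then |b| else SignType.sign a * b

theorem absDirDeriv_congr_sign {a a' : ℝ} (h : SignType.sign a = SignType.sign a') (b : ℝ) :
    absDirDeriv a b = absDirDeriv a' b := by
  have hzero : a = 0 ↔ a' = 0 := by rw [← sign_eq_zero_iff, h, sign_eq_zero_iff]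
  simp only [absDirDeriv, h, hzero]

theorem hasDerivWithinAt_abs_add_mul (a b : ℝ) :
    HasDerivWithinAt (fun t : ℝ => |a + t * b|) (absDirDeriv a b) (Ioi 0) 0 := by
  rcases eq_or_ne a 0 with rfl | ha
  · have hlin : HasDerivWithinAt (fun t : ℝ => t * |b|) |b| (Ioi 0) 0 :=
      (hasDerivAt_mul_const |b|).hasDerivWithinAt
    rw [absDirDeriv, if_pos rfl]
    refine hlin.congr (fun t ht => ?_) (by simp)
    rw [zero_add, abs_mul, abs_of_pos ht]
  · have hline : HasDerivAt (fun t : ℝ => a + t * b) b 0 := (hasDerivAt_mul_const b).const_add a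
    rw [absDirDeriv, if_neg ha]
    exact ((hasDerivAt_abs ha).comp_of_eq 0 hline (by simp)).hasDerivWithinAt

theorem sign_map_sub_map_of_strictMono {φ : ℝ → ℝ} (hφ : StrictMono φ) (x y : ℝ) :
    SignType.sign (φ x - φ y) = SignType.sign (x - y) := by
  rcases lt_trichotomy x y with h | rfl | h
  · rw [sign_neg (sub_neg.mpr h), sign_neg (sub_neg.mpr (hφ h))]
  · simp only [sub_self]
  · rw [sign_pos (sub_pos.mpr h), sign_pos (sub_pos.mpr (hφ h))]

end AbsDirDeriv

section Fused

variable {ι κ : Type*} [Fintype ι] [Fintype κ]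

/-- The separable objective `∑ fᵢ(xᵢ)` with a weighted total-variation penalty on a finite graph,
whose edge `k : κ` joins the vertices `p k` and `q k` and has weight `m k`. -/
noncomputable def fusedObjective (f : ι → ℝ → ℝ) (m : κ → ℝ) (p q : κ → ι) (x : ι → ℝ) : ℝ :=
  ∑ i, f i (x i) + ∑ k, m k * |x (p k) - x (q k)|

/-- The one-sided derivative at `x` along `d` of a `fusedObjective` whose separable part has
gradient `g` at `x`. -/
noncomputable def fusedDirDeriv (g : ι → ℝ) (m : κ → ℝ) (p q : κ → ι) (x d : ι → ℝ) : ℝ :=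
  ∑ i, g i * d i + ∑ k, m k * absDirDeriv (x (p k) - x (q k)) (d (p k) - d (q k))

variable {f : ι → ℝ → ℝ} {g : ι → ℝ} {m : κ → ℝ} {p q : κ → ι} {x : ι → ℝ} {S : ι → Set ℝ}

theorem convexOn_fusedObjective (hm : ∀ k, 0 ≤ m k) (hf : ∀ i, ConvexOn ℝ (S i) (f i)) :
    ConvexOn ℝ (univ.pi S) (fusedObjective f m p q) := by
  have hS : Convex ℝ (univ.pi S) := convex_pi fun i _ => (hf i).1
  have hsep : ∀ i, ConvexOn ℝ (univ.pi S) fun x => f i (x i) := fun i =>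
    ((hf i).comp_linearMap (LinearMap.proj i : (ι → ℝ) →ₗ[ℝ] ℝ)).subset
      (fun _ hx => hx i (mem_univ i)) hS
  have habs : ∀ k, ConvexOn ℝ (univ.pi S) fun x => |x (p k) - x (q k)| := fun k => by
    let proj (i : ι) : (ι → ℝ) →ₗ[ℝ] ℝ := LinearMap.proj i
    exact (convexOn_univ_norm.comp_linearMap (proj (p k) - proj (q k))).subset (subset_univ _) hS
  exact (convexOn_sum _ hS fun i _ => hsep i).add
    (convexOn_sum _ hS fun k _ => (habs k).smul (hm k))

theorem hasDerivWithinAt_fusedObjective (hf : ∀ i, HasDerivAt (f i) (g i) (x i)) (d : ι → ℝ) :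
    HasDerivWithinAt (fun t : ℝ => fusedObjective f m p q (x + t • d))
      (fusedDirDeriv g m p q x d) (Ioi 0) 0 := by
  have hsep : ∀ i, HasDerivAt (fun t : ℝ => f i (x i + t * d i)) (g i * d i) 0 := fun i =>
    (hf i).comp_of_eq 0 ((hasDerivAt_mul_const (d i)).const_add (x i)) (by simp)
  have habs : ∀ k, HasDerivWithinAt
      (fun t : ℝ => m k * |(x (p k) + t * d (p k)) - (x (q k) + t * d (q k))|)
      (m k * absDirDeriv (x (p k) - x (q k)) (d (p k) - d (q k))) (Ioi 0) 0 := fun k => by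
    simpa only [mul_sub, add_sub_add_comm] using
      (hasDerivWithinAt_abs_add_mul (x (p k) - x (q k)) (d (p k) - d (q k))).const_mul (m k)
  exact (HasDerivWithinAt.fun_sum fun i _ => (hsep i).hasDerivWithinAt).add
    (HasDerivWithinAt.fun_sum fun k _ => habs k)

theorem isMinOn_fusedObjective_iff (hm : ∀ k, 0 ≤ m k) (hconv : ∀ i, ConvexOn ℝ (S i) (f i))
    (hS : ∀ i, S i ∈ 𝓝 (x i)) (hf : ∀ i, HasDerivAt (f i) (g i) (x i)) :
    IsMinOn (fusedObjective f m p q) (univ.pi S) x ↔ ∀ d, 0 ≤ fusedDirDeriv g m p q x d :=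
  isMinOn_iff_rightDeriv_nonneg (convexOn_fusedObjective hm hconv)
    (set_pi_mem_nhds finite_univ fun i _ => hS i) (hasDerivWithinAt_fusedObjective hf)

theorem fusedDirDeriv_comp_strictMono {φ : ℝ → ℝ} (hφ : StrictMono φ) (d : ι → ℝ) :
    fusedDirDeriv g m p q (fun i => φ (x i)) d = fusedDirDeriv g m p q x d := by
  simp only [fusedDirDeriv, absDirDeriv_congr_sign (sign_map_sub_map_of_strictMono hφ _ _)]

end Fused

theorem convexOn_mul_add_mul_exp (w : ℝ) {s : ℝ} (hs : 0 ≤ s) :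
    ConvexOn ℝ univ fun u : ℝ => w * u + s * Real.exp u :=
  ((LinearMap.mulLeft ℝ w).convexOn convex_univ).add (convexOn_exp.smul hs)

theorem convexOn_mul_add_mul_sq (w : ℝ) {s : ℝ} (hs : 0 ≤ s) :
    ConvexOn ℝ univ fun u : ℝ => w * u + s / 2 * u ^ 2 :=
  ((LinearMap.mulLeft ℝ w).convexOn convex_univ).add (even_two.convexOn_pow.smul (by positivity))

theorem hasDerivAt_mul_add_mul_exp (w s u : ℝ) :
    HasDerivAt (fun u : ℝ => w * u + s * Real.exp u) (w + s * Real.exp u) u :=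
  (hasDerivAt_const_mul w).add ((Real.hasDerivAt_exp u).const_mul s)

theorem hasDerivAt_mul_add_mul_sq (w s u : ℝ) :
    HasDerivAt (fun u : ℝ => w * u + s / 2 * u ^ 2) (w + s * u) u := by
  refine ((hasDerivAt_const_mul w).add ((hasDerivAt_pow 2 u).const_mul (s / 2))).congr_deriv ?_
  ring

theorem stmt_3_general {ι κ : Type*} [Fintype ι] [Fintype κ] (p q : κ → ι) {m : κ → ℝ}
    (hm : ∀ k, 0 ≤ m k) (w : ι → ℝ) {s : ι → ℝ} (hs : ∀ i, 0 ≤ s i) (c : ι → ℝ) :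
    (∀ x, fusedObjective (fun i u => w i * u + s i * Real.exp u) m p q c ≤
        fusedObjective (fun i u => w i * u + s i * Real.exp u) m p q x) ↔
      ∀ z : ι → ℝ, (∀ i, 0 < z i) →
        fusedObjective (fun i u => w i * u + s i / 2 * u ^ 2) m p q (fun i => Real.exp (c i)) ≤
          fusedObjective (fun i u => w i * u + s i / 2 * u ^ 2) m p q z := by
  have hlog := isMinOn_fusedObjective_iff (p := p) (q := q) (x := c) hm
    (fun i => convexOn_mul_add_mul_exp (w i) (hs i)) (fun _ => univ_mem)
    fun i => hasDerivAt_mul_add_mul_exp (w i) (s i) (c i)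
  have hquad := isMinOn_fusedObjective_iff (p := p) (q := q) (x := fun i => Real.exp (c i)) hm
    (fun i => (convexOn_mul_add_mul_sq (w i) (hs i)).subset (subset_univ _) (convex_Ioi 0))
    (fun i => Ioi_mem_nhds (Real.exp_pos (c i)))
    fun i => hasDerivAt_mul_add_mul_sq (w i) (s i) (Real.exp (c i))
  simp only [fusedDirDeriv_comp_strictMono Real.exp_strictMono] at hquad
  simpa [isMinOn_iff] using hlog.trans hquad.symm

section Path

variable {n : ℕ}

theorem sum_castSucc_add_succ {R : Type*} [NonAssocSemiring R] (hn : n ≠ 0)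
    (c : Fin (n + 1) → R) :
    ∑ i : Fin n, (c i.castSucc + c i.succ) =
      ∑ i : Fin (n + 1), (if (i : ℕ) = 0 ∨ (i : ℕ) = n then 1 else 2) * c i := by
  have hinit : ∑ i : Fin n, c i.castSucc = ∑ i : Fin (n + 1), if (i : ℕ) = n then 0 else c i := by
    simp [Fin.sum_univ_castSucc, (Fin.is_lt _).ne]
  have htail : ∑ i : Fin n, c i.succ = ∑ i : Fin (n + 1), if (i : ℕ) = 0 then 0 else c i := by
    simp [Fin.sum_univ_succ]
  rw [Finset.sum_add_distrib, hinit, htail, ← Finset.sum_add_distrib]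
  refine Finset.sum_congr rfl fun i _ => ?_
  by_cases h0 : (i : ℕ) = 0
  · simp [h0, hn.symm]
  · by_cases hlast : (i : ℕ) = n <;> simp [h0, hlast, hn, two_mul]

/-- The coefficients `w` of the linear part of `H`: each vertex of the path on `n + 1` vertices gets
`-1 / (2n)` times its degree. -/
noncomputable def pathWeight (n : ℕ) (i : Fin (n + 1)) : ℝ :=
  if (i : ℕ) = 0 ∨ (i : ℕ) = n then -(1 / (2 * (n : ℝ))) else -(1 / (n : ℝ))

theorem sum_pathWeight_mul (hn : n ≠ 0) (c : Fin (n + 1) → ℝ) :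
    ∑ i, pathWeight n i * c i =
      -(1 / (2 * (n : ℝ))) * ∑ i : Fin n, (c i.castSucc + c i.succ) := by
  rw [sum_castSucc_add_succ hn, Finset.mul_sum]
  refine Finset.sum_congr rfl fun i _ => ?_
  unfold pathWeight
  split_ifs <;> field_simp

theorem fusedObjective_path_exp (hn : n ≠ 0) (s c : Fin (n + 1) → ℝ) (μ : ℝ) :
    fusedObjective (fun i u => pathWeight n i * u + s i * Real.exp u) (fun _ => μ)
        Fin.castSucc Fin.succ c =
      -(1 / (2 * (n : ℝ))) * ∑ i : Fin n, (c i.castSucc + c i.succ)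
        + μ * ∑ i : Fin n, |c i.castSucc - c i.succ| + ∑ i, s i * Real.exp (c i) := by
  rw [fusedObjective, Finset.sum_add_distrib, sum_pathWeight_mul hn, ← Finset.mul_sum,
    add_right_comm]

theorem fusedObjective_path_sq (s z : Fin (n + 1) → ℝ) (μ : ℝ) :
    fusedObjective (fun i u => pathWeight n i * u + s i / 2 * u ^ 2) (fun _ => μ)
        Fin.castSucc Fin.succ z =
      1 / 2 * ∑ i, s i * z i ^ 2 + ∑ i, pathWeight n i * z i
        + μ * ∑ i : Fin n, |z i.castSucc - z i.succ| := by
  have hquad : ∑ i, s i / 2 * z i ^ 2 = 1 / 2 * ∑ i, s i * z i ^ 2 := by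
    rw [Finset.mul_sum]
    exact Finset.sum_congr rfl fun i _ => by ring
  rw [fusedObjective, Finset.sum_add_distrib, hquad, ← Finset.mul_sum, add_comm (∑ i, _ * z i)]

end Path

/-- exponential change of variables.  `ĉ` minimizes the
log-density objective `G` over `ℝ^{n+1}` iff `ẑ = exp(ĉ)` (componentwise)
minimizes the total-variation penalized quadratic `H` over the positive
orthant `(0,∞)^{n+1}`.  Here indices `1,…,n+1` are realized as `Fin (n+1)`,
and the pair `(cᵢ, c_{i+1})` as `(c i.castSucc, c i.succ)` for `i : Fin n`. -/
theorem stmt_3 (n : ℕ) (hn : 1 ≤ n)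
    (lam : ℝ) (hlam : 1 / (2 * (n : ℝ)) < lam)
    (s : Fin (n + 1) → ℝ) (hs : ∀ i, 0 < s i)
    (G H : (Fin (n + 1) → ℝ) → ℝ)
    (hG : ∀ c : Fin (n + 1) → ℝ, G c =
      -(1 / (2 * (n : ℝ))) * ∑ i : Fin n, (c i.castSucc + c i.succ)
      + (lam - 1 / (2 * (n : ℝ))) * ∑ i : Fin n, |c i.castSucc - c i.succ|
      + ∑ i : Fin (n + 1), s i * Real.exp (c i))
    (hH : ∀ z : Fin (n + 1) → ℝ, H z =
      (1 / 2) * ∑ i : Fin (n + 1), s i * z i ^ 2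
      + ∑ i : Fin (n + 1), (if (i : ℕ) = 0 ∨ (i : ℕ) = n then -(1 / (2 * (n : ℝ)))
          else -(1 / (n : ℝ))) * z i
      + (lam - 1 / (2 * (n : ℝ))) * ∑ i : Fin n, |z i.castSucc - z i.succ|)
    (chat : Fin (n + 1) → ℝ) :
    (∀ c : Fin (n + 1) → ℝ, G chat ≤ G c) ↔
      (∀ z : Fin (n + 1) → ℝ, (∀ i, 0 < z i) →
        H (fun i => Real.exp (chat i)) ≤ H z) := by
  simpa only [hG, hH, ← pathWeight.eq_def, fusedObjective_path_exp (Nat.one_le_iff_ne_zero.mp hn),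
      fusedObjective_path_sq] using
    stmt_3_general Fin.castSucc Fin.succ (fun _ => (sub_pos.mpr hlam).le) (pathWeight n)
      (fun i => (hs i).le) chat
end

section
/- Fix an integer n ≥ 3, a real λ > 1/(2n), and strictly positive reals s₁,...,s_{n+1}. Let w ∈ ℝ^{n+1} with w₁ = w_{n+1} = −1/(2n) and wᵢ = −1/n for 2 ≤ i ≤ n, and let ẑ be a minimizer over ℝ^{n+1} of H(z) = (1/2) Σ_{i=1}^{n+1} sᵢ zᵢ² + Σ_{i=1}^{n+1} wᵢ zᵢ + (λ − 1/(2n)) Σ_{i=1}^{n} |zᵢ − z_{i+1}|. Then for every interior index i with 2 ≤ i ≤ n − 1: if sᵢ ≤ s_{i+1} then ẑᵢ ≥ ẑ_{i+1}, and if sᵢ ≥ s_{i+1} then ẑᵢ ≤ ẑ_{i+1}. -/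
/-!
Truncating a minimizer at zero does not increase any of the three terms of the objective, and
strictly lowers the quadratic one unless the minimizer is already nonnegative. If now `p, q` are
adjacent with `s p ≤ s q` but `z p < z q`, replace both values by their mean: the total variation
does not increase, nor does the linear term when `w p ≤ w q`, while the quadratic term drops
strictly, because
`s p * z p ^ 2 + s q * z q ^ 2 - (s p + s q) * ((z p + z q) / 2) ^ 2`
`  = (s p + s q) * (z q - z p) ^ 2 / 4 + (s q - s p) * (z q ^ 2 - z p ^ 2) / 2 > 0`.
-/

section Averaging

variable {ι : Type*} [DecidableEq ι]

/-- The vector `z` with both of its values at `p` and `q` replaced by their mean; the competitor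
against which a minimizer is compared. -/
noncomputable def averageAt (p q : ι) (z : ι → ℝ) : ι → ℝ :=
  fun k => if k = p ∨ k = q then (z p + z q) / 2 else z k

theorem averageAt_comm (p q : ι) (z : ι → ℝ) : averageAt p q z = averageAt q p z := by
  funext k
  simp only [averageAt, or_comm, add_comm]

theorem averageAt_left (p q : ι) (z : ι → ℝ) : averageAt p q z p = (z p + z q) / 2 :=
  if_pos (Or.inl rfl)

theorem averageAt_right (p q : ι) (z : ι → ℝ) : averageAt p q z q = (z p + z q) / 2 :=
  if_pos (Or.inr rfl)

theorem averageAt_of_ne {p q k : ι} (hp : k ≠ p) (hq : k ≠ q) (z : ι → ℝ) :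
    averageAt p q z k = z k :=
  if_neg (not_or.mpr ⟨hp, hq⟩)

theorem sum_averageAt_sub [Fintype ι] {p q : ι} (hpq : p ≠ q) (f : ι → ℝ → ℝ) (z : ι → ℝ) :
    ∑ k, (f k (averageAt p q z k) - f k (z k)) =
      (f p ((z p + z q) / 2) - f p (z p)) + (f q ((z p + z q) / 2) - f q (z q)) := by
  rw [Fintype.sum_eq_add p q hpq fun k hk => by rw [averageAt_of_ne hk.1 hk.2, sub_self],
    averageAt_left, averageAt_right]

theorem sum_abs_averageAt_sub [Fintype ι] {p q : ι} (hpq : p ≠ q) (z : ι → ℝ) :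
    ∑ k, |averageAt p q z k - z k| = |z p - z q| := by
  have hp : (z p + z q) / 2 - z p = -((z p - z q) / 2) := by ring
  have hq : (z p + z q) / 2 - z q = (z p - z q) / 2 := by ring
  have hsum := sum_averageAt_sub hpq (fun k x => |x - z k|) z
  simp only [sub_self, abs_zero, sub_zero, hp, hq, abs_neg, abs_div, Nat.abs_ofNat] at hsum
  rw [hsum, add_halves]

end Averaging

section PenalizedQuadratic

variable {ι : Type*} [Fintype ι]

/-- A separable quadratic objective with quadratic coefficients `s`, linear coefficients `w` and an
arbitrary penalty `V`. -/
noncomputable def penalizedQuadratic (s w : ι → ℝ) (V : (ι → ℝ) → ℝ) (z : ι → ℝ) : ℝ :=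
  (1 / 2) * ∑ i, s i * z i ^ 2 + ∑ i, w i * z i + V z

variable {s w z : ι → ℝ} {V : (ι → ℝ) → ℝ}

theorem penalizedQuadratic_eq_sum_add (s w : ι → ℝ) (V : (ι → ℝ) → ℝ) (z : ι → ℝ) :
    penalizedQuadratic s w V z = ∑ i, (1 / 2 * (s i * z i ^ 2) + w i * z i) + V z := by
  rw [penalizedQuadratic, Finset.mul_sum, Finset.sum_add_distrib]

theorem nonneg_of_minimizes_penalizedQuadratic (hs : ∀ i, 0 < s i) (hw : ∀ i, w i ≤ 0)
    (hV : V (fun i => max (z i) 0) ≤ V z)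
    (hmin : ∀ y, penalizedQuadratic s w V z ≤ penalizedQuadratic s w V y) (k : ι) :
    0 ≤ z k := by
  by_contra! hk
  have hsq (i : ι) : max (z i) 0 ^ 2 ≤ z i ^ 2 := by
    rw [sq_le_sq, abs_of_nonneg (le_max_right _ _)]
    exact max_le (le_abs_self _) (abs_nonneg _)
  have hsq_k : max (z k) 0 ^ 2 < z k ^ 2 := by
    rw [max_eq_right hk.le, zero_pow two_ne_zero]
    exact sq_pos_of_neg hk
  have hlin (i : ι) : w i * max (z i) 0 ≤ w i * z i :=
    mul_le_mul_of_nonpos_left (le_max_left _ _) (hw i)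
  have hdecrease : ∑ i, (1 / 2 * (s i * max (z i) 0 ^ 2) + w i * max (z i) 0) <
      ∑ i, (1 / 2 * (s i * z i ^ 2) + w i * z i) := by
    refine Finset.sum_lt_sum (fun i _ => ?_) ⟨k, Finset.mem_univ k, ?_⟩
    · linarith [mul_le_mul_of_nonneg_left (hsq i) (hs i).le, hlin i]
    · linarith [mul_lt_mul_of_pos_left hsq_k (hs k), hlin k]
  have hle := hmin fun i => max (z i) 0
  simp only [penalizedQuadratic_eq_sum_add] at hle
  linarith

theorem add_mul_mean_sq_lt {a b x y : ℝ} (hab : a ≤ b) (hpos : 0 < a + b) (hxy : x < y)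
    (hnonneg : 0 ≤ x + y) : (a + b) * ((x + y) / 2) ^ 2 < a * x ^ 2 + b * y ^ 2 := by
  have hspread : 0 < (a + b) * (y - x) ^ 2 := mul_pos hpos (pow_pos (sub_pos.mpr hxy) 2)
  have hcorr : 0 ≤ (b - a) * ((y - x) * (x + y)) :=
    mul_nonneg (sub_nonneg.mpr hab) (mul_nonneg (sub_pos.mpr hxy).le hnonneg)
  linarith

theorem le_of_minimizes_penalizedQuadratic [DecidableEq ι] {p q : ι} (hpq : p ≠ q)
    (hs : s p ≤ s q) (hspos : 0 < s p + s q) (hw : w p ≤ w q) (hz : 0 ≤ z p + z q)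
    (hV : V (averageAt p q z) ≤ V z)
    (hmin : ∀ y, penalizedQuadratic s w V z ≤ penalizedQuadratic s w V y) :
    z q ≤ z p := by
  by_contra! hlt
  have hquad := add_mul_mean_sq_lt hs hspos hlt hz
  have hlin : 0 ≤ (w q - w p) * (z q - z p) :=
    mul_nonneg (sub_nonneg.mpr hw) (sub_pos.mpr hlt).le
  have hsum := sum_averageAt_sub hpq (fun k x => 1 / 2 * (s k * x ^ 2) + w k * x) z
  have hle := hmin (averageAt p q z)
  simp only [penalizedQuadratic_eq_sum_add] at hle
  rw [Finset.sum_sub_distrib] at hsum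
  linarith

end PenalizedQuadratic

section PathVariation

variable {n : ℕ}

/-- The total variation of a finite sequence, i.e. the sum of the absolute differences of
consecutive values. -/
def pathVariation (z : Fin (n + 1) → ℝ) : ℝ :=
  ∑ i : Fin n, |z i.castSucc - z i.succ|

theorem pathVariation_max_le (z : Fin (n + 1) → ℝ) (c : ℝ) :
    pathVariation (fun i => max (z i) c) ≤ pathVariation z :=
  Finset.sum_le_sum fun _ _ => abs_max_sub_max_le_abs _ _ _

theorem sum_castSucc_add_succ_le {e : Fin (n + 1) → ℝ} (he : ∀ k, 0 ≤ e k) :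
    ∑ j : Fin n, (e j.castSucc + e j.succ) ≤ 2 * ∑ k, e k := by
  rw [Finset.sum_add_distrib]
  linarith [Fin.sum_univ_castSucc e, Fin.sum_univ_succ e, he 0, he (Fin.last n)]

-- Averaging changes each difference other than the `i`-th by at most the displacements of its
-- endpoints. Every vertex lies on at most two edges, so over all edges these displacements add up
-- to at most `2 * d` with `d = |z i.castSucc - z i.succ|`; the `i`-th edge accounts for `d` of it,
-- and the remaining `d` is paid for by the `i`-th difference, which drops from `d` to `0`.
theorem pathVariation_averageAt_le (i : Fin n) (z : Fin (n + 1) → ℝ) :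
    pathVariation (averageAt i.castSucc i.succ z) ≤ pathVariation z := by
  set y := averageAt i.castSucc i.succ z with hy
  let e : Fin (n + 1) → ℝ := fun k => |y k - z k|
  have hmerged : y i.castSucc = y i.succ := by rw [hy, averageAt_left, averageAt_right]
  have htotal : ∑ k, e k = |z i.castSucc - z i.succ| :=
    sum_abs_averageAt_sub i.castSucc_lt_succ.ne z
  have hgap : |z i.castSucc - z i.succ| ≤ e i.castSucc + e i.succ := by
    calc |z i.castSucc - z i.succ| ≤ |z i.castSucc - y i.castSucc| + |y i.castSucc - z i.succ| :=
          abs_sub_le _ _ _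
      _ = e i.castSucc + e i.succ := by simp only [e, hmerged, abs_sub_comm (z i.castSucc)]
  have hedge (j : Fin n) : |y j.castSucc - y j.succ| ≤
      |z j.castSucc - z j.succ| + (e j.castSucc + e j.succ) := by
    have hfst := abs_sub_le (y j.castSucc) (z j.castSucc) (y j.succ)
    have hsnd := abs_sub_le (z j.castSucc) (z j.succ) (y j.succ)
    rw [abs_sub_comm (z j.succ)] at hsnd
    linarith
  have hdouble : ∑ j : Fin n, (e j.castSucc + e j.succ) ≤ 2 * |z i.castSucc - z i.succ| :=
    htotal ▸ sum_castSucc_add_succ_le fun k => abs_nonneg (y k - z k)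
  have hothers := Finset.sum_le_sum fun j (_ : j ∈ Finset.univ.erase i) => hedge j
  rw [Finset.sum_add_distrib] at hothers
  have hi := Finset.mem_univ i
  rw [← Finset.add_sum_erase _ _ hi] at hdouble
  rw [pathVariation, pathVariation, ← Finset.add_sum_erase _ _ hi,
    ← Finset.add_sum_erase _ _ hi, hmerged, sub_self, abs_zero]
  linarith

end PathVariation

/-- The linear coefficients of the fused density objective: each of the `n` observations
contributes `-1 / (2 * n)` to both segments adjacent to it, so that the two boundary segments carry
half the coefficient of an interior one. -/
noncomputable def fusedDensityWeight (n : ℕ) (i : Fin (n + 1)) : ℝ :=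
  if (i : ℕ) = 0 ∨ (i : ℕ) = n then -(1 / (2 * (n : ℝ))) else -(1 / (n : ℝ))

theorem fusedDensityWeight_nonpos (n : ℕ) (i : Fin (n + 1)) : fusedDensityWeight n i ≤ 0 := by
  unfold fusedDensityWeight
  split_ifs <;> exact neg_nonpos.mpr (by positivity)

theorem fusedDensityWeight_castSucc_eq_succ {n : ℕ} {i : Fin n} (hpos : 1 ≤ (i : ℕ))
    (hlt : (i : ℕ) + 1 < n) :
    fusedDensityWeight n i.castSucc = fusedDensityWeight n i.succ := by
  simp only [fusedDensityWeight, Fin.val_castSucc, Fin.val_succ]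
  rw [if_neg (by omega), if_neg (by omega)]

theorem stmt_5_general {n : ℕ} {s w z : Fin (n + 1) → ℝ} {μ : ℝ} (hs : ∀ i, 0 < s i)
    (hw : ∀ i, w i ≤ 0) (hμ : 0 ≤ μ)
    (hmin : ∀ y, penalizedQuadratic s w (fun x => μ * pathVariation x) z ≤
      penalizedQuadratic s w (fun x => μ * pathVariation x) y) (i : Fin n) :
    (s i.castSucc ≤ s i.succ → w i.castSucc ≤ w i.succ → z i.succ ≤ z i.castSucc) ∧
    (s i.succ ≤ s i.castSucc → w i.succ ≤ w i.castSucc → z i.castSucc ≤ z i.succ) := by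
  have hz := nonneg_of_minimizes_penalizedQuadratic hs hw
    (mul_le_mul_of_nonneg_left (pathVariation_max_le z 0) hμ) hmin
  have hne : i.castSucc ≠ i.succ := i.castSucc_lt_succ.ne
  have havg := mul_le_mul_of_nonneg_left (pathVariation_averageAt_le i z) hμ
  constructor
  · intro hs_le hw_le
    exact le_of_minimizes_penalizedQuadratic hne hs_le (add_pos (hs _) (hs _)) hw_le
      (add_nonneg (hz _) (hz _)) havg hmin
  · intro hs_le hw_le
    rw [averageAt_comm] at havg
    exact le_of_minimizes_penalizedQuadratic hne.symm hs_le (add_pos (hs _) (hs _)) hw_le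
      (add_nonneg (hz _) (hz _)) havg hmin

/-- the ordering property.  For the total-variation penalized
quadratic objective `H` (whose minimizer gives the piecewise constant values
of the univariate FDE), among adjacent *interior* segments (1-indexed
segments `i, i+1` with `2 ≤ i ≤ n-1`, realized as `i.castSucc, i.succ` for
`i : Fin n` with `1 ≤ i ≤ n-2`), the shorter segment receives the larger
value: `sᵢ ≤ s_{i+1} → ẑᵢ ≥ ẑ_{i+1}` and `sᵢ ≥ s_{i+1} → ẑᵢ ≤ ẑ_{i+1}`. -/
theorem stmt_5 (n : ℕ) (hn : 3 ≤ n)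
    (lam : ℝ) (hlam : 1 / (2 * (n : ℝ)) < lam)
    (s : Fin (n + 1) → ℝ) (hs : ∀ i, 0 < s i)
    (w : Fin (n + 1) → ℝ)
    (hw : ∀ i : Fin (n + 1),
      w i = if (i : ℕ) = 0 ∨ (i : ℕ) = n then -(1 / (2 * (n : ℝ)))
        else -(1 / (n : ℝ)))
    (H : (Fin (n + 1) → ℝ) → ℝ)
    (hH : ∀ z : Fin (n + 1) → ℝ, H z =
      (1 / 2) * ∑ i : Fin (n + 1), s i * z i ^ 2
      + ∑ i : Fin (n + 1), w i * z i
      + (lam - 1 / (2 * (n : ℝ))) * ∑ i : Fin n, |z i.castSucc - z i.succ|)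
    (zhat : Fin (n + 1) → ℝ)
    (hmin : ∀ z : Fin (n + 1) → ℝ, H zhat ≤ H z) :
    ∀ i : Fin n, 1 ≤ (i : ℕ) → (i : ℕ) ≤ n - 2 →
      (s i.castSucc ≤ s i.succ → zhat i.succ ≤ zhat i.castSucc) ∧
      (s i.succ ≤ s i.castSucc → zhat i.castSucc ≤ zhat i.succ) := by
  obtain rfl : w = fusedDensityWeight n := funext hw
  obtain rfl : H = penalizedQuadratic s (fusedDensityWeight n)
    fun z => (lam - 1 / (2 * (n : ℝ))) * pathVariation z := funext hH
  intro i hpos hle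
  have hweight := fusedDensityWeight_castSucc_eq_succ hpos (by omega)
  have hord := stmt_5_general hs (fusedDensityWeight_nonpos n) (sub_nonneg.mpr hlam.le) hmin i
  exact ⟨fun h => hord.1 h hweight.le, fun h => hord.2 h hweight.ge⟩
end

section
/- Let [a,b] ⊂ ℝ be compact, f₀ a probability density on [a,b] with f₀ > 0 and TV(log f₀) < ∞, and let f be a probability density on [a,b] with f > 0 and TV(log f) < ∞. Set p_f = (1/2) log((f + f₀)/(2f₀)) and J(f) = 1 + TV(log f) + TV(log f₀), and suppose J(f) ≤ M. Then: (i) TV(p_f) ≤ M/2; (ii) there exist points x̄, x̲ ∈ [a,b] with p_f(x̄) ≥ 0 and p_f(x̲) ≤ 0; and (iii) sup_{x ∈ [a,b]} |p_f(x)| ≤ M/2. -/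
open MeasureTheory Set

/-!
With `u = log f - log f₀` one has `p_f = φ ∘ u` for `φ u = (1 / 2) * log ((exp u + 1) / 2)`.
The derivative of `φ` is half the sigmoid, so `φ` is increasing and `1 / 2`-Lipschitz, and
`φ 0 = 0`. Hence `TV(p_f) ≤ TV(u) / 2 ≤ (TV(log f) + TV(log f₀)) / 2`, and `p_f` has the sign of
`f - f₀`. Two densities of equal mass cannot be strictly ordered everywhere, so `p_f` takes both
signs, and its total variation then bounds its absolute value.
-/

/-- The function `φ` with `p_f = φ ∘ (log f - log f₀)`: half the logarithm of the mean of `exp u`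
and `1`. -/
noncomputable def halfLogMidpoint (u : ℝ) : ℝ :=
  (1 / 2) * Real.log ((Real.exp u + 1) / 2)

namespace halfLogMidpoint

theorem apply_log_sub_log {x y : ℝ} (hx : 0 < x) (hy : 0 < y) :
    halfLogMidpoint (Real.log x - Real.log y) = (1 / 2) * Real.log ((x + y) / (2 * y)) := by
  rw [halfLogMidpoint, Real.exp_sub, Real.exp_log hx, Real.exp_log hy]
  congr 2
  field_simp

theorem apply_zero : halfLogMidpoint 0 = 0 := by
  norm_num [halfLogMidpoint]

theorem hasDerivAt (u : ℝ) : HasDerivAt halfLogMidpoint (Real.sigmoid u / 2) u := by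
  have hmean : HasDerivAt (fun v => (Real.exp v + 1) / 2) (Real.exp u / 2) u :=
    ((Real.hasDerivAt_exp u).add_const 1).div_const 2
  refine ((hmean.log (by positivity)).const_mul (1 / 2)).congr_deriv ?_
  rw [Real.sigmoid_def, Real.exp_neg]
  field_simp

theorem strictMono : StrictMono halfLogMidpoint :=
  strictMono_of_hasDerivAt_pos hasDerivAt fun u => half_pos (Real.sigmoid_pos u)

theorem lipschitzWith : LipschitzWith (1 / 2) halfLogMidpoint := by
  refine lipschitzWith_of_nnnorm_deriv_le (fun u => (hasDerivAt u).differentiableAt) fun u => ?_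
  rw [(hasDerivAt u).deriv, ← NNReal.coe_le_coe, coe_nnnorm,
    Real.norm_of_nonneg (half_pos (Real.sigmoid_pos u)).le]
  push_cast
  linarith [Real.sigmoid_le_one u]

theorem nonneg_iff {u : ℝ} : 0 ≤ halfLogMidpoint u ↔ 0 ≤ u := by
  simpa only [apply_zero] using strictMono.le_iff_le (a := 0) (b := u)

theorem nonpos_iff {u : ℝ} : halfLogMidpoint u ≤ 0 ↔ u ≤ 0 := by
  simpa only [apply_zero] using strictMono.le_iff_le (a := u) (b := 0)

end halfLogMidpoint

theorem half_log_add_div_nonneg_iff {x y : ℝ} (hx : 0 < x) (hy : 0 < y) :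
    0 ≤ (1 / 2) * Real.log ((x + y) / (2 * y)) ↔ y ≤ x := by
  rw [← halfLogMidpoint.apply_log_sub_log hx hy, halfLogMidpoint.nonneg_iff, sub_nonneg,
    Real.log_le_log_iff hy hx]

theorem half_log_add_div_nonpos_iff {x y : ℝ} (hx : 0 < x) (hy : 0 < y) :
    (1 / 2) * Real.log ((x + y) / (2 * y)) ≤ 0 ↔ x ≤ y := by
  rw [← halfLogMidpoint.apply_log_sub_log hx hy, halfLogMidpoint.nonpos_iff, sub_nonpos,
    Real.log_le_log_iff hx hy]

section Variation

open scoped NNReal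

variable {α : Type*} [LinearOrder α] {s : Set α}

theorem eVariationOn_sub_le {E : Type*} [SeminormedAddCommGroup E] (f g : α → E) :
    eVariationOn (f - g) s ≤ eVariationOn f s + eVariationOn g s := by
  refine iSup_le fun ⟨n, u, hu, hus⟩ => ?_
  calc ∑ i ∈ Finset.range n, edist ((f - g) (u (i + 1))) ((f - g) (u i))
      ≤ ∑ i ∈ Finset.range n,
          (edist (f (u (i + 1))) (f (u i)) + edist (g (u (i + 1))) (g (u i))) :=
        Finset.sum_le_sum fun i _ => by
          simpa only [Pi.sub_apply, sub_eq_add_neg, edist_neg_neg] using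
            edist_add_add_le (f (u (i + 1))) (-g (u (i + 1))) (f (u i)) (-g (u i))
    _ = ∑ i ∈ Finset.range n, edist (f (u (i + 1))) (f (u i)) +
          ∑ i ∈ Finset.range n, edist (g (u (i + 1))) (g (u i)) := Finset.sum_add_distrib
    _ ≤ eVariationOn f s + eVariationOn g s :=
        add_le_add (eVariationOn.sum_le hu hus) (eVariationOn.sum_le hu hus)

theorem enorm_le_eVariationOn_of_nonneg_of_nonpos {p : α → ℝ} {t y z : α} (ht : t ∈ s)
    (hy : y ∈ s) (hz : z ∈ s) (hpy : 0 ≤ p y) (hpz : p z ≤ 0) :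
    ‖p t‖ₑ ≤ eVariationOn p s := by
  have enorm_le_of_abs_le {w : α} (hw : w ∈ s) (h : |p t| ≤ |p t - p w|) :
      ‖p t‖ₑ ≤ eVariationOn p s := by
    refine le_trans ?_ (eVariationOn.edist_le p ht hw)
    rw [edist_eq_enorm_sub, enorm_le_iff_norm_le]
    exact h
  rcases le_total 0 (p t) with hpt | hpt
  · refine enorm_le_of_abs_le hz ?_
    rw [abs_of_nonneg hpt, abs_of_nonneg (by linarith)]
    linarith
  · refine enorm_le_of_abs_le hy ?_
    rw [abs_of_nonpos hpt, abs_of_nonpos (by linarith)]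
    linarith

theorem eVariationOn_half_log_add_div_le {f g : α → ℝ} (hf : ∀ t ∈ s, 0 < f t)
    (hg : ∀ t ∈ s, 0 < g t) :
    eVariationOn (fun t => (1 / 2) * Real.log ((f t + g t) / (2 * g t))) s ≤
      (1 / 2 : ℝ≥0) * (eVariationOn (fun t => Real.log (f t)) s +
        eVariationOn (fun t => Real.log (g t)) s) := by
  let u : α → ℝ := (fun t => Real.log (f t)) - fun t => Real.log (g t)
  calc eVariationOn (fun t => (1 / 2) * Real.log ((f t + g t) / (2 * g t))) s
      = eVariationOn (halfLogMidpoint ∘ u) s := eVariationOn.congr fun t ht =>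
        (halfLogMidpoint.apply_log_sub_log (hf t ht) (hg t ht)).symm
    _ ≤ (1 / 2 : ℝ≥0) * eVariationOn u s :=
        halfLogMidpoint.lipschitzWith.lipschitzOnWith.comp_eVariationOn_le (mapsTo_univ u s)
    _ ≤ (1 / 2 : ℝ≥0) * (eVariationOn (fun t => Real.log (f t)) s +
          eVariationOn (fun t => Real.log (g t)) s) := by
        gcongr
        exact eVariationOn_sub_le _ _

end Variation

theorem exists_le_of_setIntegral_le {α : Type*} [MeasurableSpace α] {μ : Measure α} {s : Set α}
    {f g : α → ℝ} (hs : MeasurableSet s) (hμs : μ s ≠ 0) (hf : IntegrableOn f s μ)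
    (hg : IntegrableOn g s μ) (h : ∫ t in s, f t ∂μ ≤ ∫ t in s, g t ∂μ) :
    ∃ x ∈ s, f x ≤ g x := by
  by_contra! hlt
  have hle : g ≤ᵐ[μ.restrict s] f := ae_restrict_of_forall_mem hs fun t ht => (hlt t ht).le
  have heq : g =ᵐ[μ.restrict s] f :=
    (integral_eq_iff_of_ae_le hg hf hle).1 ((integral_mono_ae hg hf hle).antisymm h)
  have hnotMem : ∀ᵐ t ∂μ, t ∉ s := by
    filter_upwards [(ae_restrict_iff' hs).1 heq] with t hgf ht
    exact (hlt t ht).ne (hgf ht)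
  exact hμs (measure_eq_zero_iff_ae_notMem.2 hnotMem)

theorem stmt_14_general {α : Type*} [LinearOrder α] [MeasurableSpace α] {μ : Measure α}
    {s : Set α} (hs : MeasurableSet s) (hμs : μ s ≠ 0) {f₀ f : α → ℝ}
    (hf₀pos : ∀ t ∈ s, 0 < f₀ t) (hf₀int : IntegrableOn f₀ s μ)
    (hf₀TV : eVariationOn (fun t => Real.log (f₀ t)) s ≠ ⊤)
    (hfpos : ∀ t ∈ s, 0 < f t) (hfint : IntegrableOn f s μ)
    (hfTV : eVariationOn (fun t => Real.log (f t)) s ≠ ⊤)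
    (hmass : ∫ t in s, f t ∂μ = ∫ t in s, f₀ t ∂μ) {M : ℝ}
    (hM : (eVariationOn (fun t => Real.log (f t)) s).toReal +
      (eVariationOn (fun t => Real.log (f₀ t)) s).toReal ≤ M) :
    eVariationOn (fun t => (1 / 2) * Real.log ((f t + f₀ t) / (2 * f₀ t))) s ≤
        ENNReal.ofReal (M / 2) ∧
    (∃ xbar ∈ s, 0 ≤ (1 / 2) * Real.log ((f xbar + f₀ xbar) / (2 * f₀ xbar))) ∧
    (∃ xlow ∈ s, (1 / 2) * Real.log ((f xlow + f₀ xlow) / (2 * f₀ xlow)) ≤ 0) ∧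
    (∀ t ∈ s, |(1 / 2) * Real.log ((f t + f₀ t) / (2 * f₀ t))| ≤ M / 2) := by
  have hM2 : 0 ≤ M / 2 := div_nonneg (le_trans (by positivity) hM) zero_le_two
  have hTV : eVariationOn (fun t => (1 / 2) * Real.log ((f t + f₀ t) / (2 * f₀ t))) s ≤
      ENNReal.ofReal (M / 2) := by
    refine (eVariationOn_half_log_add_div_le hfpos hf₀pos).trans ?_
    rw [ENNReal.le_ofReal_iff_toReal_le (by finiteness) hM2, ENNReal.toReal_mul,
      ENNReal.toReal_add hfTV hf₀TV, ENNReal.coe_toReal]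
    push_cast
    linarith
  obtain ⟨y, hy, hfy⟩ := exists_le_of_setIntegral_le hs hμs hf₀int hfint hmass.ge
  obtain ⟨z, hz, hfz⟩ := exists_le_of_setIntegral_le hs hμs hfint hf₀int hmass.le
  have hpy := (half_log_add_div_nonneg_iff (hfpos y hy) (hf₀pos y hy)).2 hfy
  have hpz := (half_log_add_div_nonpos_iff (hfpos z hz) (hf₀pos z hz)).2 hfz
  refine ⟨hTV, ⟨y, hy, hpy⟩, ⟨z, hz, hpz⟩, fun t ht => ?_⟩
  have henorm := (enorm_le_eVariationOn_of_nonneg_of_nonpos ht hy hz hpy hpz).trans hTV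
  rwa [Real.enorm_eq_ofReal_abs, ENNReal.ofReal_le_ofReal_iff hM2] at henorm

/-- if `f, f₀` are positive probability densities on `[a,b]`
with logs of bounded variation and `J(f) = 1 + TV(log f) + TV(log f₀) ≤ M`,
then for `p_f = (1/2)log((f+f₀)/(2f₀))`:
(i) `TV(p_f) ≤ M/2`; (ii) `p_f` takes a nonnegative and a nonpositive value
on `[a,b]`; (iii) `|p_f| ≤ M/2` on `[a,b]`. -/
theorem stmt_14 (a b : ℝ) (hab : a < b)
    (f₀ f : ℝ → ℝ)
    (hf₀pos : ∀ t ∈ Icc a b, 0 < f₀ t)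
    (hf₀int : IntegrableOn f₀ (Icc a b))
    (hf₀one : (∫ t in Icc a b, f₀ t) = 1)
    (hf₀TV : eVariationOn (fun t => Real.log (f₀ t)) (Icc a b) ≠ ⊤)
    (hfpos : ∀ t ∈ Icc a b, 0 < f t)
    (hfint : IntegrableOn f (Icc a b))
    (hfone : (∫ t in Icc a b, f t) = 1)
    (hfTV : eVariationOn (fun t => Real.log (f t)) (Icc a b) ≠ ⊤)
    (M : ℝ)
    (hJ : 1 + (eVariationOn (fun t => Real.log (f t)) (Icc a b)).toReal
      + (eVariationOn (fun t => Real.log (f₀ t)) (Icc a b)).toReal ≤ M) :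
    eVariationOn (fun t => (1 / 2) * Real.log ((f t + f₀ t) / (2 * f₀ t)))
        (Icc a b) ≤ ENNReal.ofReal (M / 2) ∧
    (∃ xbar ∈ Icc a b,
      0 ≤ (1 / 2) * Real.log ((f xbar + f₀ xbar) / (2 * f₀ xbar))) ∧
    (∃ xlow ∈ Icc a b,
      (1 / 2) * Real.log ((f xlow + f₀ xlow) / (2 * f₀ xlow)) ≤ 0) ∧
    (∀ t ∈ Icc a b,
      |(1 / 2) * Real.log ((f t + f₀ t) / (2 * f₀ t))| ≤ M / 2) :=
  stmt_14_general measurableSet_Icc (by simp [hab]) hf₀pos hf₀int hf₀TV hfpos hfint hfTV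
    (hfone.trans hf₀one.symm) (by linarith)
end

section
/- Let [a,b] ⊂ ℝ be compact, let M > 0, and let G be any collection of functions g : [a,b] → ℝ such that every g ∈ G has TV(g) ≤ M and every g ∈ G takes at least one nonnegative value and at least one nonpositive value. Then there is a universal constant K (not depending on G, M, or the measure) such that for every probability measure Q on [a,b] and every ε > 0, there exist pairs of functions (l₁,u₁),...,(l_N,u_N) with N ≤ exp(K·M/ε) such that ‖uⱼ − lⱼ‖_{L²(Q)} ≤ ε for each j, and every g ∈ G satisfies lⱼ ≤ g ≤ uⱼ pointwise for some j; i.e., the bracketing entropy of G at radius ε in L²(Q) is at most K·M/ε. -/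
open MeasureTheory Set

/-!
By the Jordan decomposition each `g` is `4M` times a difference of two monotone functions into
`[0, 1]`, so it suffices to bracket such monotone functions with `exp (O(1/ε))` brackets. Fix
`ε ≈ 2 ^ (-m)`. For each scale `j < m`, round `f` down to a multiple of `1 / R` with
`R = 2 ^ (m - j)` and record the result at the `R * 8 ^ j`-quantiles of `Q`. The record determines
`f` up to `1 / R` except on `R` quantile cells at most, that is, off a set of mass `8 ^ (-j)`, and
there are at most `exp (R * (3j + 2))` monotone records. Intersecting the brackets of all scales
yields a bracket of width `w` with `Q {w > 2 ^ (j - m)} ≤ 8 ^ (-j)` for every `j`, hence of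
`L²`-norm `O(2 ^ (-m))`, and the exponents `2 ^ (m - j) * (3j + 2)` sum to `O(2 ^ m)`. A single
scale would lose a logarithmic factor.
-/

open Filter ProbabilityTheory
open scoped Pointwise

section BracketCover

variable {α : Type*} [MeasurableSpace α] {W W' F F' : Set (α → ℝ)} {x y : ℝ}

/-- `F` is covered by at most `x` measurable brackets whose widths `u - l` lie in `W`. Keeping the
admissible widths as an arbitrary set allows several width conditions to be imposed at once by
intersecting brackets. -/
def HasBracketCover (W F : Set (α → ℝ)) (x : ℝ) : Prop :=
  ∃ B : Finset ((α → ℝ) × (α → ℝ)), (B.card : ℝ) ≤ x ∧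
    (∀ b ∈ B, Measurable b.1 ∧ Measurable b.2 ∧ b.1 ≤ b.2 ∧ b.2 - b.1 ∈ W) ∧
    ∀ f ∈ F, ∃ b ∈ B, f ∈ Icc b.1 b.2

namespace HasBracketCover

theorem of_subset_Icc {l u : α → ℝ} (hl : Measurable l) (hu : Measurable u) (hlu : l ≤ u)
    (hF : F ⊆ Icc l u) : HasBracketCover (Iic (u - l)) F 1 :=
  ⟨{(l, u)}, by simp, by simpa using ⟨hl, hu, hlu⟩,
    fun _ hf => ⟨_, Finset.mem_singleton_self _, hF hf⟩⟩

theorem weaken (h : HasBracketCover W F x)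
    (hW : ∀ w ∈ W, Measurable w → 0 ≤ w → w ∈ W') (hxy : x ≤ y) : HasBracketCover W' F y := by
  obtain ⟨B, hcard, hB, hF⟩ := h
  refine ⟨B, hcard.trans hxy, fun b hb => ?_, hF⟩
  obtain ⟨hl, hu, hlu, hw⟩ := hB b hb
  exact ⟨hl, hu, hlu, hW _ hw (hu.sub hl) (sub_nonneg.2 hlu)⟩

theorem inter (h : HasBracketCover W F x) (h' : HasBracketCover W' F y)
    (hW : IsLowerSet W) (hW' : IsLowerSet W') (hx : 0 ≤ x) :
    HasBracketCover (W ∩ W') F (x * y) := by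
  classical
  obtain ⟨B, hcard, hB, hF⟩ := h
  obtain ⟨B', hcard', hB', hF'⟩ := h'
  let meet := fun p : ((α → ℝ) × (α → ℝ)) × ((α → ℝ) × (α → ℝ)) =>
    (p.1.1 ⊔ p.2.1, p.1.2 ⊓ p.2.2)
  refine ⟨{b ∈ (B ×ˢ B').image meet | b.1 ≤ b.2}, ?_, fun b hb => ?_, fun f hf => ?_⟩
  · calc _ ≤ ((B ×ˢ B').card : ℝ) := by
          exact_mod_cast (Finset.card_filter_le _ _).trans Finset.card_image_le
      _ = B.card * B'.card := by rw [Finset.card_product, Nat.cast_mul]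
      _ ≤ x * y := by gcongr
  · obtain ⟨hb, hle⟩ := Finset.mem_filter.1 hb
    obtain ⟨⟨p, q⟩, hpq, rfl⟩ := Finset.mem_image.1 hb
    obtain ⟨hp, hq⟩ := Finset.mem_product.1 hpq
    obtain ⟨hpl, hpu, -, hpW⟩ := hB p hp
    obtain ⟨hql, hqu, -, hqW⟩ := hB' q hq
    exact ⟨hpl.sup hql, hpu.inf hqu, hle, hW (sub_le_sub inf_le_left le_sup_left) hpW,
      hW' (sub_le_sub inf_le_right le_sup_right) hqW⟩
  · obtain ⟨p, hp, hfp⟩ := hF f hf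
    obtain ⟨q, hq, hfq⟩ := hF' f hf
    have hmem : f ∈ Icc (meet (p, q)).1 (meet (p, q)).2 :=
      ⟨sup_le hfp.1 hfq.1, le_inf hfp.2 hfq.2⟩
    exact ⟨meet (p, q), Finset.mem_filter.2
      ⟨Finset.mem_image_of_mem meet (Finset.mk_mem_product hp hq), hmem.1.trans hmem.2⟩, hmem⟩

theorem inter_biInter {V : ℕ → Set (α → ℝ)} {z : ℕ → ℝ} (h : HasBracketCover W F x)
    (hW : IsLowerSet W) (hx : 0 ≤ x) (m : ℕ) (hV : ∀ j, IsLowerSet (V j)) (hz : ∀ j, 0 ≤ z j)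
    (hcover : ∀ j < m, HasBracketCover (V j) F (z j)) :
    HasBracketCover (W ∩ ⋂ j < m, V j) F (x * ∏ j ∈ Finset.range m, z j) := by
  induction m with
  | zero => simpa using h
  | succ m ih =>
    have hlower : IsLowerSet (W ∩ ⋂ j < m, V j) :=
      hW.inter (isLowerSet_iInter₂ fun j _ => hV j)
    have hstep := (ih fun j hj => hcover j (hj.trans m.lt_succ_self)).inter
      (hcover m m.lt_succ_self) hlower (hV m) (mul_nonneg hx (Finset.prod_nonneg fun j _ => hz j))
    rwa [Finset.prod_range_succ, ← mul_assoc, biInter_lt_succ, ← inter_assoc]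

theorem sub (h : HasBracketCover W F x) (h' : HasBracketCover W' F' y) (hx : 0 ≤ x) :
    HasBracketCover (W + W') (F - F') (x * y) := by
  classical
  obtain ⟨B, hcard, hB, hF⟩ := h
  obtain ⟨B', hcard', hB', hF'⟩ := h'
  refine ⟨(B ×ˢ B').image fun p => (p.1.1 - p.2.2, p.1.2 - p.2.1), ?_, fun b hb => ?_, ?_⟩
  · calc _ ≤ ((B ×ˢ B').card : ℝ) := by exact_mod_cast Finset.card_image_le
      _ = B.card * B'.card := by rw [Finset.card_product, Nat.cast_mul]
      _ ≤ x * y := by gcongr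
  · obtain ⟨⟨p, q⟩, hpq, rfl⟩ := Finset.mem_image.1 hb
    obtain ⟨hp, hq⟩ := Finset.mem_product.1 hpq
    obtain ⟨hpl, hpu, hple, hpW⟩ := hB p hp
    obtain ⟨hql, hqu, hqle, hqW⟩ := hB' q hq
    refine ⟨hpl.sub hqu, hpu.sub hql, sub_le_sub hple hqle, ?_⟩
    convert add_mem_add hpW hqW using 1
    exact sub_sub_sub_eq .. |>.trans (by abel)
  · rintro _ ⟨f, hf, f', hf', rfl⟩
    obtain ⟨p, hp, hfp⟩ := hF f hf
    obtain ⟨q, hq, hfq⟩ := hF' f' hf'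
    exact ⟨_, Finset.mem_image_of_mem _ (Finset.mk_mem_product hp hq),
      sub_le_sub hfp.1 hfq.2, sub_le_sub hfp.2 hfq.1⟩

theorem smul (h : HasBracketCover W F x) {r : ℝ} (hr : 0 ≤ r) :
    HasBracketCover (r • W) (r • F) x := by
  classical
  obtain ⟨B, hcard, hB, hF⟩ := h
  refine ⟨B.image fun b => r • b, (Nat.cast_le.2 Finset.card_image_le).trans hcard,
    fun b hb => ?_, ?_⟩
  · obtain ⟨p, hp, rfl⟩ := Finset.mem_image.1 hb
    obtain ⟨hl, hu, hlu, hw⟩ := hB p hp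
    refine ⟨hl.const_smul r, hu.const_smul r, smul_le_smul_of_nonneg_left hlu hr, ?_⟩
    simpa only [Prod.smul_fst, Prod.smul_snd, smul_sub] using smul_mem_smul_set (a := r) hw
  · rintro _ ⟨f, hf, rfl⟩
    obtain ⟨p, hp, hfp⟩ := hF f hf
    exact ⟨_, Finset.mem_image_of_mem _ hp, smul_le_smul_of_nonneg_left hfp.1 hr,
      smul_le_smul_of_nonneg_left hfp.2 hr⟩

end HasBracketCover

end BracketCover

section Widths

variable {α : Type*} [MeasurableSpace α] {p : ENNReal} {μ : Measure α} {ε ε' : ℝ}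

/-- The ball of radius `ε` in `L^p(μ)`, as a set of functions rather than of classes. -/
def lpBall (p : ENNReal) (μ : Measure α) (ε : ℝ) : Set (α → ℝ) :=
  {w | AEStronglyMeasurable w μ ∧ eLpNorm w p μ ≤ ENNReal.ofReal ε}

theorem lpBall_add_subset (hp : 1 ≤ p) (hε : 0 ≤ ε) (hε' : 0 ≤ ε') :
    lpBall p μ ε + lpBall p μ ε' ⊆ lpBall p μ (ε + ε') := by
  rintro _ ⟨w, ⟨hw, hwε⟩, w', ⟨hw', hwε'⟩, rfl⟩
  refine ⟨hw.add hw', (eLpNorm_add_le hw hw' hp).trans ?_⟩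
  rw [ENNReal.ofReal_add hε hε']
  exact add_le_add hwε hwε'

theorem smul_lpBall_subset {r : ℝ} (hr : 0 ≤ r) :
    r • lpBall p μ ε ⊆ lpBall p μ (r * ε) := by
  rintro _ ⟨w, ⟨hw, hwε⟩, rfl⟩
  refine ⟨hw.const_smul r, ?_⟩
  rw [eLpNorm_const_smul, ENNReal.ofReal_mul hr, Real.enorm_of_nonneg hr]
  gcongr

theorem eLpNorm_two_le_ofReal_iff {w : α → ℝ} (hε : 0 ≤ ε) :
    eLpNorm w 2 μ ≤ ENNReal.ofReal ε ↔
      ∫⁻ t, ENNReal.ofReal (w t ^ 2) ∂μ ≤ ENNReal.ofReal (ε ^ 2) := by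
  have hpow : eLpNorm w 2 μ ^ 2 = ∫⁻ t, ENNReal.ofReal (w t ^ 2) ∂μ := by
    simpa [← enorm_pow, Real.enorm_of_nonneg, sq_nonneg] using
      eLpNorm_nnreal_pow_eq_lintegral (f := w) (μ := μ) (two_ne_zero : (2 : NNReal) ≠ 0)
  rw [← hpow, ENNReal.ofReal_pow hε, ENNReal.pow_le_pow_left_iff two_ne_zero]

/-- The functions exceeding `δ` on a set of `μ`-measure at most `η`. -/
def smallTail (μ : Measure α) (δ η : ℝ) : Set (α → ℝ) :=
  {w | μ.real {t | δ < w t} ≤ η}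

theorem isLowerSet_smallTail [IsFiniteMeasure μ] (δ η : ℝ) : IsLowerSet (smallTail μ δ η) :=
  fun _ _ hle hw => (measureReal_mono fun t (ht : δ < _) => ht.trans_le (hle t)).trans hw

theorem sq_le_of_le_two_pow_mul {δ y : ℝ} (hy : 0 ≤ y) (m : ℕ) (hym : y ≤ 2 ^ m * δ) :
    y ^ 2 ≤ δ ^ 2 * (1 + ∑ j ∈ Finset.range m, if 2 ^ j * δ < y then (4 : ℝ) ^ (j + 1) else 0) := by
  induction m with
  | zero => simpa using pow_le_pow_left₀ hy (by simpa using hym) 2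
  | succ m ih =>
    rw [Finset.sum_range_succ, ← add_assoc, mul_add]
    by_cases hlt : 2 ^ m * δ < y
    · calc y ^ 2 ≤ (2 ^ (m + 1) * δ) ^ 2 := by gcongr
        _ = δ ^ 2 * 4 ^ (m + 1) := by rw [mul_pow, pow_right_comm]; norm_num [mul_comm]
        _ ≤ _ := by rw [if_pos hlt]; exact le_add_of_nonneg_left (by positivity)
    · rw [if_neg hlt, mul_zero, add_zero]
      exact ih (not_lt.1 hlt)

theorem sum_inv_eight_pow_mul_four_pow_le (m : ℕ) :
    ∑ j ∈ Finset.range m, (1 / 8 ^ j * 4 ^ (j + 1) : ℝ) ≤ 8 := by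
  have hterm : ∀ j : ℕ, (1 / 8 ^ j * 4 ^ (j + 1) : ℝ) = 4 * (1 / 2) ^ j := fun j => by
    rw [pow_succ, ← mul_assoc, one_div_mul_eq_div, ← div_pow]
    norm_num [mul_comm]
  simp only [hterm, ← Finset.mul_sum]
  linarith [sum_geometric_two_le m]

theorem mem_lpBall_two_of_smallTail [IsProbabilityMeasure μ] {w : α → ℝ} (hw : Measurable w)
    (hw₀ : 0 ≤ w) {δ : ℝ} (hδ : 0 ≤ δ) (m : ℕ) (hwm : ∀ t, w t ≤ 2 ^ m * δ)
    (htail : ∀ j < m, w ∈ smallTail μ (2 ^ j * δ) (1 / 8 ^ j)) :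
    w ∈ lpBall 2 μ (3 * δ) := by
  let A : ℕ → Set α := fun j => {t | 2 ^ j * δ < w t}
  have hA : ∀ j, MeasurableSet (A j) := fun j => measurableSet_lt measurable_const hw
  let step : ℕ → α → ℝ := fun j => (A j).indicator fun _ => 4 ^ (j + 1)
  have hstep : ∀ j, Integrable (step j) μ := fun j =>
    (integrable_const _).indicator (hA j)
  have hsum : Integrable (fun t => ∑ j ∈ Finset.range m, step j t) μ :=
    integrable_finsetSum _ fun j _ => hstep j
  have hmaj : ∀ t, w t ^ 2 ≤ δ ^ 2 * (1 + ∑ j ∈ Finset.range m, step j t) := fun t =>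
    sq_le_of_le_two_pow_mul (hw₀ t) m (hwm t)
  have hint : ∫ t, δ ^ 2 * (1 + ∑ j ∈ Finset.range m, step j t) ∂μ ≤ (3 * δ) ^ 2 := by
    calc ∫ t, δ ^ 2 * (1 + ∑ j ∈ Finset.range m, step j t) ∂μ
        = δ ^ 2 * (1 + ∑ j ∈ Finset.range m, μ.real (A j) * 4 ^ (j + 1)) := by
          rw [integral_const_mul, integral_add (integrable_const _) hsum,
            integral_finsetSum _ fun j _ => hstep j]
          simp [step, integral_indicator_const, hA]
      _ ≤ δ ^ 2 * (1 + ∑ j ∈ Finset.range m, 1 / 8 ^ j * 4 ^ (j + 1)) := by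
          gcongr with j hj
          exact htail j (Finset.mem_range.1 hj)
      _ ≤ δ ^ 2 * (1 + 8) := by gcongr; exact sum_inv_eight_pow_mul_four_pow_le m
      _ = (3 * δ) ^ 2 := by ring
  refine ⟨hw.aestronglyMeasurable, (eLpNorm_two_le_ofReal_iff (by positivity)).2 ?_⟩
  calc ∫⁻ t, ENNReal.ofReal (w t ^ 2) ∂μ
      ≤ ∫⁻ t, ENNReal.ofReal (δ ^ 2 * (1 + ∑ j ∈ Finset.range m, step j t)) ∂μ := by
        gcongr with t
        exact hmaj t
    _ = ENNReal.ofReal (∫ t, δ ^ 2 * (1 + ∑ j ∈ Finset.range m, step j t) ∂μ) :=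
        (ofReal_integral_eq_lintegral_ofReal (((integrable_const _).add hsum).const_mul _)
          (Eventually.of_forall fun t => (sq_nonneg _).trans (hmaj t))).symm
    _ ≤ ENNReal.ofReal ((3 * δ) ^ 2) := ENNReal.ofReal_le_ofReal hint

end Widths

section Quantiles

theorem quantile_mem_of_ordConnected {α : Type*} [LinearOrder α] [MeasurableSpace α]
    {μ : Measure α} [IsFiniteMeasure μ] {S : Set α} (hS : S.OrdConnected) {q : ℝ} {x : α}
    (hbelow : μ.real {t | ∀ s ∈ S, t < s} < q)
    (habove : q < μ.real ({t | ∀ s ∈ S, t < s} ∪ S))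
    (hx : μ.real (Iio x) ≤ q) (hx' : q ≤ μ.real (Iic x)) : x ∈ S := by
  obtain ⟨y, hyx, hy⟩ := not_subset.1 fun h : Iic x ⊆ {t | ∀ s ∈ S, t < s} =>
    (hbelow.trans_le hx').not_ge (measureReal_mono h)
  obtain ⟨z, hz, hzx⟩ := not_subset.1 fun h : {t | ∀ s ∈ S, t < s} ∪ S ⊆ Iio x =>
    (hx.trans_lt habove).not_ge (measureReal_mono h)
  simp only [mem_ofPred_eq, not_forall, not_lt] at hy
  obtain ⟨s, hs, hsy⟩ := hy
  have hsx : s ≤ x := hsy.trans hyx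
  have hxz : x ≤ z := not_lt.1 hzx
  rcases hz with hz | hz
  · exact absurd (hz s hs) (hsx.trans hxz).not_gt
  · exact hS.out hs hz ⟨hsx, hxz⟩

theorem exists_pos_nat_div_mem_Ioo {N : ℕ} (hN : 0 < N) {y d : ℝ} (hy : 0 ≤ y) (hd : 1 / N < d) :
    ∃ i : ℕ, 0 < i ∧ (i / N : ℝ) ∈ Ioo y (y + d) := by
  have hN' : (0 : ℝ) < N := Nat.cast_pos.2 hN
  refine ⟨⌊N * y⌋₊ + 1, Nat.succ_pos _, ?_, ?_⟩
  · rw [lt_div_iff₀' hN']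
    exact_mod_cast Nat.lt_floor_add_one (N * y)
  · calc ((⌊N * y⌋₊ + 1 : ℕ) / N : ℝ) ≤ (N * y + 1) / N := by
          push_cast
          gcongr
          exact Nat.floor_le (by positivity)
      _ = y + 1 / N := by field_simp
      _ < y + d := by gcongr

variable (Q : Measure ℝ) [IsProbabilityMeasure Q]

theorem exists_quantile {q : ℝ} (hq₀ : 0 < q) (hq₁ : q < 1) :
    ∃ x, Q.real (Iio x) ≤ q ∧ q ≤ Q.real (Iic x) := by
  let T : Set ℝ := {t | q ≤ cdf Q t}
  have hT : T.Nonempty := ((tendsto_cdf_atTop Q).eventually (eventually_ge_nhds hq₁)).exists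
  have hT' : BddBelow T := by
    obtain ⟨z, hz⟩ := ((tendsto_cdf_atBot Q).eventually (eventually_lt_nhds hq₀)).exists
    exact ⟨z, fun t ht => ((cdf Q).mono.reflect_lt (hz.trans_le ht)).le⟩
  refine ⟨sInf T, ?_, ?_⟩
  · have hleft : Function.leftLim (cdf Q) (sInf T) ≤ q :=
      le_of_tendsto ((cdf Q).mono.tendsto_leftLim _)
        (eventually_mem_nhdsWithin.mono fun t ht =>
          (not_le.1 fun h => notMem_of_lt_csInf ht hT' h).le)
    rw [measureReal_def, ← measure_cdf Q, (cdf Q).measure_Iio (tendsto_cdf_atBot Q), sub_zero]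
    exact ENNReal.toReal_le_of_le_ofReal hq₀.le (ENNReal.ofReal_le_ofReal hleft)
  · rw [← cdf_eq_real]
    refine ge_of_tendsto (((cdf Q).right_continuous _).mono Ioi_subset_Ici_self)
      (eventually_mem_nhdsWithin.mono fun t ht => ?_)
    obtain ⟨s, hs, hst⟩ := exists_lt_of_csInf_lt hT ht
    exact le_trans hs ((cdf Q).mono hst.le)

theorem exists_finset_measureReal_le_of_disjoint {N : ℕ} (hN : 0 < N) :
    ∃ X : Finset ℝ, X.card ≤ N ∧
      ∀ S : Set ℝ, S.OrdConnected → Disjoint S X → Q.real S ≤ 1 / N := by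
  have hN' : (0 : ℝ) < N := Nat.cast_pos.2 hN
  have hquant : ∀ i : ℕ, ∃ x, 0 < i → i < N →
      Q.real (Iio x) ≤ i / N ∧ (i / N : ℝ) ≤ Q.real (Iic x) := fun i => by
    by_cases hi : 0 < i ∧ i < N
    · obtain ⟨x, hx⟩ := exists_quantile Q (q := i / N) (div_pos (Nat.cast_pos.2 hi.1) hN')
        ((div_lt_one hN').2 (Nat.cast_lt.2 hi.2))
      exact ⟨x, fun _ _ => hx⟩
    · exact ⟨0, fun h h' => absurd ⟨h, h'⟩ hi⟩
  choose x hx using hquant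
  refine ⟨(Finset.range N).image x, Finset.card_image_le.trans (Finset.card_range N).le,
    fun S hS hdisj => ?_⟩
  by_contra! hlt
  let L : Set ℝ := {t | ∀ s ∈ S, t < s}
  have hunion : Q.real (L ∪ S) = Q.real L + Q.real S :=
    measureReal_union (disjoint_left.2 fun t ht hts => (ht t hts).false) hS.measurableSet
  obtain ⟨i, hi₀, hi, hi'⟩ := exists_pos_nat_div_mem_Ioo hN (measureReal_nonneg (s := L)) hlt
  rw [← hunion] at hi'
  have hiN : i < N := by
    exact_mod_cast (div_lt_one hN').1 (hi'.trans_le measureReal_le_one)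
  obtain ⟨hxi, hxi'⟩ := hx i hi₀ hiN
  exact disjoint_left.1 hdisj (quantile_mem_of_ordConnected hS hi hi' hxi hxi')
    (Finset.mem_coe.2 (Finset.mem_image_of_mem x (Finset.mem_range.2 hiN)))

end Quantiles

section MonotoneCodes

theorem card_orderHom_le (α β : Type*) [Fintype α] [LinearOrder α] [Fintype β] [LinearOrder β] :
    Nat.card (α →o β) ≤ (Fintype.card β).multichoose (Fintype.card α) := by
  -- A monotone map is determined by the multiset of its values.
  let e := Fintype.orderIsoFinOfCardEq α rfl
  let values : (α →o β) → Sym β (Fintype.card α) := fun f =>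
    ⟨(List.ofFn (f ∘ e) : Multiset β), by simp⟩
  have hinj : Function.Injective values := fun f g hfg => by
    have hperm : (List.ofFn (f ∘ e)).Perm (List.ofFn (g ∘ e)) :=
      Multiset.coe_eq_coe.1 (congrArg Subtype.val hfg)
    have hlist := hperm.eq_of_sortedLE (List.sortedLE_ofFn_iff.2 (f.monotone.comp e.monotone))
      (List.sortedLE_ofFn_iff.2 (g.monotone.comp e.monotone))
    exact DFunLike.coe_injective (e.surjective.injective_comp_right (List.ofFn_injective hlist))
  rw [← Sym.card_sym_eq_multichoose, ← Nat.card_eq_fintype_card]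
  exact Nat.card_le_card_of_injective values hinj

theorem choose_le_exp_mul_div_pow (n k : ℕ) :
    (n.choose k : ℝ) ≤ (Real.exp 1 * (n / k)) ^ k := by
  rcases k.eq_zero_or_pos with rfl | hk
  · simp
  have hk' : (0 : ℝ) < k := Nat.cast_pos.2 hk
  calc (n.choose k : ℝ) ≤ n ^ k / k.factorial := Nat.choose_le_pow_div k n
    _ = (n / k) ^ k * (k ^ k / k.factorial) := by rw [div_pow]; field_simp
    _ ≤ (n / k) ^ k * Real.exp k := by
        gcongr
        exact Real.pow_div_factorial_le_exp _ hk'.le k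
    _ = (Real.exp 1 * (n / k)) ^ k := by
        rw [mul_pow, ← Real.exp_nat_mul, mul_one, mul_comm]

theorem choose_add_mul_eight_pow_le_exp (R j : ℕ) :
    ((R + R * 8 ^ j).choose R : ℝ) ≤ Real.exp (R * (3 * j + 2)) := by
  rcases R.eq_zero_or_pos with rfl | hR
  · simp
  have two_le_exp_one : (2 : ℝ) ≤ Real.exp 1 := by linarith [Real.add_one_le_exp (1 : ℝ)]
  have hratio : ((R + R * 8 ^ j : ℕ) / R : ℝ) ≤ Real.exp (3 * j + 1) :=
    calc ((R + R * 8 ^ j : ℕ) / R : ℝ) = 1 + 8 ^ j := by push_cast; field_simp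
      _ ≤ 2 ^ (3 * j + 1) := by
          rw [pow_succ, pow_mul]
          norm_num
          linarith [one_le_pow₀ (M₀ := ℝ) (a := 8) (n := j) (by norm_num)]
      _ ≤ Real.exp 1 ^ (3 * j + 1) := by gcongr
      _ = Real.exp (3 * j + 1) := by rw [← Real.exp_nat_mul]; push_cast; ring_nf
  calc ((R + R * 8 ^ j).choose R : ℝ)
      ≤ (Real.exp 1 * ((R + R * 8 ^ j : ℕ) / R : ℝ)) ^ R := choose_le_exp_mul_div_pow _ _
    _ ≤ (Real.exp 1 * Real.exp (3 * j + 1)) ^ R := by gcongr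
    _ = Real.exp (R * (3 * j + 2)) := by
        rw [← Real.exp_add, ← Real.exp_nat_mul]; ring_nf

end MonotoneCodes

section StepEnvelopes

variable {α β : Type*} [Preorder α] [CompleteLattice β] {X : Set α}

/-- The least monotone extension to `α` of a monotone function `c` on the grid `X`; it is `⊥` to the
left of the grid. -/
def lowerStep (c : X → β) (t : α) : β := ⨆ (x : X) (_ : x ≤ t), c x

/-- The greatest monotone extension to `α` of a monotone function `c` on the grid `X`; it is `⊤` to
the right of the grid. -/
def upperStep (c : X → β) (t : α) : β := ⨅ (x : X) (_ : t ≤ x), c x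

theorem lowerStep_mono (c : X → β) : Monotone (lowerStep c) := fun _ _ hst =>
  iSup_mono fun _ => iSup_const_mono fun hx => le_trans hx hst

theorem upperStep_mono (c : X → β) : Monotone (upperStep c) := fun _ _ hst =>
  iInf_mono fun _ => iInf_const_mono fun hx => le_trans hst hx

theorem lowerStep_le_upperStep {c : X → β} (hc : Monotone c) : lowerStep c ≤ upperStep c :=
  fun _ => iSup₂_le fun _ hx => le_iInf₂ fun _ hy => hc (hx.trans hy)

theorem lowerStep_domRestrict_le {p : α → β} (hp : Monotone p) : lowerStep (X.domRestrict p) ≤ p :=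
  fun _ => iSup₂_le fun _ hx => hp hx

theorem le_upperStep_domRestrict {p : α → β} (hp : Monotone p) : p ≤ upperStep (X.domRestrict p) :=
  fun _ => le_iInf₂ fun _ hx => hp hx

theorem upperStep_le_lowerStep_of_mem (c : X → β) {x : α} (hx : x ∈ X) :
    upperStep c x ≤ lowerStep c x :=
  (iInf₂_le (⟨x, hx⟩ : X) le_rfl).trans
    (le_iSup₂ (f := fun (y : X) (_ : (y : α) ≤ x) => c y) (⟨x, hx⟩ : X) le_rfl)

end StepEnvelopes

theorem measureReal_lowerStep_lt_upperStep_le {α : Type*} [LinearOrder α] [MeasurableSpace α]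
    (μ : Measure α) [IsFiniteMeasure μ] {X : Set α} {η : ℝ}
    (hX : ∀ S : Set α, S.OrdConnected → Disjoint S X → μ.real S ≤ η) {R : ℕ}
    (c : X → Fin (R + 1)) :
    μ.real {t | lowerStep c t < upperStep c t} ≤ R * η := by
  -- Each of these `R` sets is an interval missing the grid.
  let gap : Fin R → Set α := fun k =>
    {t | lowerStep c t ≤ k.castSucc} ∩ {t | k.succ ≤ upperStep c t}
  have hcover : {t | lowerStep c t < upperStep c t} ⊆ ⋃ k, gap k := fun t ht => by
    obtain ⟨k, hk⟩ := Fin.exists_castSucc_eq.2 (ne_of_lt (lt_of_lt_of_le ht (Fin.le_last _)))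
    refine mem_iUnion.2 ⟨k, hk.ge, ?_⟩
    exact Fin.castSucc_lt_iff_succ_le.1 (hk ▸ ht)
  have hgap : ∀ k, μ.real (gap k) ≤ η := fun k => by
    refine hX _ (OrdConnected.inter ?_ ?_) (disjoint_left.2 fun x hx hxX => ?_)
    · exact IsLowerSet.ordConnected fun s t hts hs => (lowerStep_mono c hts).trans hs
    · exact IsUpperSet.ordConnected fun s t hst hs => le_trans hs (upperStep_mono c hst)
    · exact (Fin.castSucc_lt_succ (i := k)).not_ge
        (hx.2.trans ((upperStep_le_lowerStep_of_mem c hxX).trans hx.1))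
  calc μ.real {t | lowerStep c t < upperStep c t} ≤ μ.real (⋃ k, gap k) := measureReal_mono hcover
    _ ≤ ∑ k, μ.real (gap k) := measureReal_iUnion_fintype_le _
    _ ≤ ∑ _k : Fin R, η := Finset.sum_le_sum fun k _ => hgap k
    _ = R * η := by simp

section UnitMonotone

/-- The monotone functions with values in `[0, 1]`. -/
def unitMonotone (α : Type*) [Preorder α] : Set (α → ℝ) :=
  {f | Monotone f ∧ ∀ t, f t ∈ Icc (0 : ℝ) 1}

theorem exists_unitMonotone_affine_eqOn {α : Type*} [LinearOrder α] {f : α → ℝ} {s : Set α}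
    (hf : MonotoneOn f s) {C : ℝ} (hC : 0 < C) (hfC : ∀ t ∈ s, |f t| ≤ C) :
    ∃ g ∈ unitMonotone α, EqOn f (fun t => 2 * C * g t - C) s := by
  obtain ⟨F, hF, hfF⟩ := hf.exists_monotone_extension
    ⟨-C, forall_mem_image.2 fun t ht => (abs_le.1 (hfC t ht)).1⟩
    ⟨C, forall_mem_image.2 fun t ht => (abs_le.1 (hfC t ht)).2⟩
  refine ⟨fun t => projIcc 0 1 zero_le_one ((F t + C) / (2 * C)),
    ⟨fun x y hxy => Subtype.coe_le_coe.2 (monotone_projIcc _ ?_), fun t => Subtype.coe_prop _⟩,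
    fun t ht => ?_⟩
  · gcongr
    exact hF hxy
  · obtain ⟨hlow, hhigh⟩ := abs_le.1 (hfF ht ▸ hfC t ht)
    have hmem : (F t + C) / (2 * C) ∈ Icc (0 : ℝ) 1 :=
      ⟨div_nonneg (by linarith) (by positivity), (div_le_one (by positivity)).2 (by linarith)⟩
    simp only [projIcc_of_mem _ hmem, hfF ht]
    field_simp
    ring

/-- The index `⌊R y⌋` of the cell of width `1 / R` containing the point `y` of `[0, 1]`. -/
noncomputable def floorLevel (R : ℕ) {y : ℝ} (hy : y ∈ Icc (0 : ℝ) 1) : Fin (R + 1) :=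
  ⟨⌊R * y⌋₊, Nat.lt_succ_of_le <| Nat.floor_le_of_le <| mul_le_of_le_one_right R.cast_nonneg hy.2⟩

theorem mem_Icc_of_floorLevel_mem_Icc {R : ℕ} (hR : 0 < R) {y : ℝ} (hy : y ∈ Icc (0 : ℝ) 1)
    {k k' : Fin (R + 1)} (hk : floorLevel R hy ∈ Icc k k') :
    y ∈ Icc ((k : ℕ) / R : ℝ) (((k' : ℕ) + 1) / R) := by
  have hR' : (0 : ℝ) < R := Nat.cast_pos.2 hR
  constructor
  · rw [div_le_iff₀' hR']
    exact (Nat.le_floor_iff (mul_nonneg hR'.le hy.1)).1 hk.1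
  · rw [le_div_iff₀' hR']
    calc R * y ≤ ⌊R * y⌋₊ + 1 := (Nat.lt_floor_add_one _).le
      _ ≤ (k' : ℕ) + 1 := by gcongr; exact hk.2

variable {α : Type*} {R : ℕ}

/-- The bracket of all functions with values in `[0, 1]` whose level `⌊R f⌋` lies between the step
envelopes of the code `c`. -/
noncomputable def stepBracket [Preorder α] {X : Set α} (c : X → Fin (R + 1)) :
    (α → ℝ) × (α → ℝ) :=
  (fun t => (lowerStep c t).val / R, fun t => ((upperStep c t).val + 1) / R)

theorem stepBracket_fst_mono [Preorder α] {X : Set α} (c : X → Fin (R + 1)) :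
    Monotone (stepBracket c).1 := fun s t hst => by
  have : (lowerStep c s).val ≤ (lowerStep c t).val := lowerStep_mono c hst
  simp only [stepBracket]
  gcongr

theorem stepBracket_snd_mono [Preorder α] {X : Set α} (c : X → Fin (R + 1)) :
    Monotone (stepBracket c).2 := fun s t hst => by
  have : (upperStep c s).val ≤ (upperStep c t).val := upperStep_mono c hst
  simp only [stepBracket]
  gcongr

theorem stepBracket_fst_le_snd [Preorder α] {X : Set α} {c : X → Fin (R + 1)} (hc : Monotone c) :
    (stepBracket c).1 ≤ (stepBracket c).2 := fun t => by
  have : (lowerStep c t).val ≤ (upperStep c t).val + 1 :=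
    Nat.le_succ_of_le (lowerStep_le_upperStep hc t)
  simp only [stepBracket]
  gcongr
  exact_mod_cast this

theorem stepBracket_width_mem_smallTail [LinearOrder α] [MeasurableSpace α] (μ : Measure α)
    [IsFiniteMeasure μ] {X : Set α} {η : ℝ}
    (hX : ∀ S : Set α, S.OrdConnected → Disjoint S X → μ.real S ≤ η) (c : X → Fin (R + 1)) :
    (stepBracket c).2 - (stepBracket c).1 ∈ smallTail μ (1 / R) (R * η) := by
  have hwide : {t | (1 / R : ℝ) < ((stepBracket c).2 - (stepBracket c).1) t} ⊆
      {t | lowerStep c t < upperStep c t} := fun t ht => by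
    contrapose ht
    have hle : (upperStep c t).val ≤ (lowerStep c t).val := Fin.le_def.1 (not_lt.1 ht)
    simp only [stepBracket, mem_ofPred_eq, Pi.sub_apply, ← sub_div, not_lt]
    gcongr
    linarith [(Nat.cast_le (α := ℝ)).2 hle]
  exact (measureReal_mono hwide).trans (measureReal_lowerStep_lt_upperStep_le μ hX c)

theorem exists_mem_stepBracket_of_mem_unitMonotone [Preorder α] (X : Set α) (hR : 0 < R)
    {f : α → ℝ} (hf : f ∈ unitMonotone α) :
    ∃ c : X →o Fin (R + 1), f ∈ Icc (stepBracket c).1 (stepBracket c).2 := by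
  let p : α → Fin (R + 1) := fun t => floorLevel R (hf.2 t)
  have hp : Monotone p := fun s t hst => Nat.floor_mono (by gcongr; exact hf.1 hst)
  have hmem := fun t => mem_Icc_of_floorLevel_mem_Icc hR (hf.2 t)
    ⟨lowerStep_domRestrict_le (X := X) hp t, le_upperStep_domRestrict (X := X) hp t⟩
  exact ⟨⟨X.domRestrict p, fun _ _ h => hp h⟩, fun t => (hmem t).1, fun t => (hmem t).2⟩

theorem hasBracketCover_smallTail_unitMonotone (Q : Measure ℝ) [IsProbabilityMeasure Q] {N : ℕ}
    (hR : 0 < R) (hN : 0 < N) :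
    HasBracketCover (smallTail Q (1 / R) (R / N)) (unitMonotone ℝ) ((R + N).choose R) := by
  classical
  obtain ⟨X, hXN, hX⟩ := exists_finset_measureReal_le_of_disjoint Q hN
  let Code := X →o Fin (R + 1)
  have : Finite Code := DFunLike.finite _
  have := Fintype.ofFinite Code
  refine ⟨Finset.univ.image fun c : Code => stepBracket c, ?_, fun b hb => ?_, fun f hf => ?_⟩
  · refine Nat.cast_le.2 ?_
    calc _ ≤ Nat.card Code := by rw [Nat.card_eq_fintype_card]; exact Finset.card_image_le
      _ ≤ (R + 1).multichoose X.card := by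
          simpa only [Fintype.card_fin, Fintype.card_coe] using card_orderHom_le X (Fin (R + 1))
      _ = (R + X.card).choose R := by
          rw [Nat.multichoose_eq, add_right_comm, Nat.add_sub_cancel, Nat.choose_symm_add]
      _ ≤ (R + N).choose R := Nat.choose_le_choose R (by gcongr)
  · obtain ⟨c, -, rfl⟩ := Finset.mem_image.1 hb
    refine ⟨(stepBracket_fst_mono c).measurable, (stepBracket_snd_mono c).measurable,
      stepBracket_fst_le_snd c.monotone, ?_⟩
    simpa only [mul_one_div] using stepBracket_width_mem_smallTail Q hX c
  · obtain ⟨c, hc⟩ := exists_mem_stepBracket_of_mem_unitMonotone X hR hf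
    exact ⟨stepBracket c, Finset.mem_image_of_mem _ (Finset.mem_univ c), hc⟩

theorem hasBracketCover_dyadic_smallTail_unitMonotone (Q : Measure ℝ) [IsProbabilityMeasure Q]
    (hR : 0 < R) (j : ℕ) :
    HasBracketCover (smallTail Q (1 / R) (1 / 8 ^ j)) (unitMonotone ℝ)
      (Real.exp (R * (3 * j + 2))) := by
  have hmass : (R / (R * 8 ^ j : ℕ) : ℝ) = 1 / 8 ^ j := by push_cast; field_simp
  exact hmass ▸ (hasBracketCover_smallTail_unitMonotone Q hR (by positivity)).weaken
    (fun _ hw _ _ => hw) (choose_add_mul_eight_pow_le_exp R j)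

theorem sum_two_pow_sub_mul_eq (m : ℕ) :
    ∑ j ∈ Finset.range m, (2 : ℝ) ^ (m - j) * (3 * j + 2) = 10 * 2 ^ m - (6 * m + 10) := by
  induction m with
  | zero => simp
  | succ m ih =>
    have hdouble : ∑ j ∈ Finset.range m, (2 : ℝ) ^ (m + 1 - j) * (3 * j + 2) =
        2 * ∑ j ∈ Finset.range m, (2 : ℝ) ^ (m - j) * (3 * j + 2) := by
      rw [Finset.mul_sum]
      refine Finset.sum_congr rfl fun j hj => ?_
      rw [Nat.succ_sub (Finset.mem_range.1 hj).le, pow_succ']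
      ring
    rw [Finset.sum_range_succ, hdouble, ih, Nat.add_sub_cancel_left]
    push_cast
    ring

theorem exists_two_pow_ge_and_sub_one_le {x : ℝ} (hx : 0 < x) :
    ∃ m : ℕ, x ≤ 2 ^ m ∧ (2 : ℝ) ^ m - 1 ≤ 2 * x := by
  rcases le_total x 1 with hx₁ | hx₁
  · exact ⟨0, by simpa using hx₁, by simpa using hx.le⟩
  · obtain ⟨n, hn, hn'⟩ := exists_nat_pow_near hx₁ one_lt_two
    exact ⟨n + 1, hn'.le, by rw [pow_succ]; linarith⟩

theorem hasBracketCover_lpBall_two_pow_unitMonotone (Q : Measure ℝ) [IsProbabilityMeasure Q]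
    (m : ℕ) :
    HasBracketCover (lpBall 2 Q (3 * (1 / 2 ^ m))) (unitMonotone ℝ)
      (Real.exp (10 * (2 ^ m - 1))) := by
  have hbase : HasBracketCover (Iic (1 - 0)) (unitMonotone ℝ) 1 :=
    .of_subset_Icc measurable_const measurable_const zero_le_one
      fun f hf => ⟨fun t => (hf.2 t).1, fun t => (hf.2 t).2⟩
  have hscale : ∀ j < m, HasBracketCover (smallTail Q (2 ^ j * (1 / 2 ^ m)) (1 / 8 ^ j))
      (unitMonotone ℝ) (Real.exp (2 ^ (m - j) * (3 * j + 2))) := fun j hj => by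
    have hwidth : (2 ^ j * (1 / 2 ^ m) : ℝ) = 1 / 2 ^ (m - j) := by
      rw [mul_one_div, pow_sub₀ _ two_ne_zero hj.le]
      field_simp
    rw [hwidth]
    exact_mod_cast hasBracketCover_dyadic_smallTail_unitMonotone Q (R := 2 ^ (m - j))
      (by positivity) j
  refine (hbase.inter_biInter (isLowerSet_Iic _) zero_le_one m
    (fun _ => isLowerSet_smallTail _ _) (fun _ => (Real.exp_pos _).le) hscale).weaken ?_ ?_
  · rintro w ⟨hw₁, hw⟩ hmeas hw₀
    refine mem_lpBall_two_of_smallTail hmeas hw₀ (by positivity) m (fun t => ?_)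
      (mem_iInter₂.1 hw)
    rw [mul_one_div_cancel (by positivity)]
    simpa using hw₁ t
  · rw [one_mul, ← Real.exp_sum, sum_two_pow_sub_mul_eq]
    gcongr
    linarith [(Nat.cast_nonneg m : (0 : ℝ) ≤ m)]

theorem hasBracketCover_lpBall_unitMonotone (Q : Measure ℝ) [IsProbabilityMeasure Q] {ε : ℝ}
    (hε : 0 < ε) : HasBracketCover (lpBall 2 Q ε) (unitMonotone ℝ) (Real.exp (60 / ε)) := by
  obtain ⟨m, hm, hm'⟩ := exists_two_pow_ge_and_sub_one_le (div_pos three_pos hε)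
  have hradius : 3 * (1 / 2 ^ m) ≤ ε := by
    rw [mul_one_div, div_le_iff₀ (by positivity)]
    exact (div_le_iff₀' hε).1 hm
  refine (hasBracketCover_lpBall_two_pow_unitMonotone Q m).weaken
    (fun w hw _ _ => ⟨hw.1, hw.2.trans (ENNReal.ofReal_le_ofReal hradius)⟩) ?_
  gcongr
  calc (10 * (2 ^ m - 1) : ℝ) ≤ 10 * (2 * (3 / ε)) := by gcongr
    _ = 60 / ε := by ring

end UnitMonotone

section BoundedVariation

theorem abs_le_of_eVariationOn_le {α : Type*} [LinearOrder α] {g : α → ℝ} {s : Set α} {M : ℝ}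
    (hM : 0 ≤ M) (hg : eVariationOn g s ≤ ENNReal.ofReal M) (hnonneg : ∃ x ∈ s, 0 ≤ g x)
    (hnonpos : ∃ x ∈ s, g x ≤ 0) {t : α} (ht : t ∈ s) : |g t| ≤ M := by
  obtain ⟨x, hx, hgx⟩ := hnonneg
  obtain ⟨y, hy, hgy⟩ := hnonpos
  have hdist : ∀ r ∈ s, ∀ r' ∈ s, g r - g r' ≤ M := fun r hr r' hr' => by
    have hedist := (eVariationOn.edist_le g hr hr').trans hg
    rw [edist_dist, ENNReal.ofReal_le_ofReal_iff hM] at hedist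
    exact (le_abs_self _).trans hedist
  exact abs_le.2 ⟨by linarith [hdist x hx t ht], by linarith [hdist t ht y hy]⟩

theorem exists_unitMonotone_sub_eqOn {α : Type*} [LinearOrder α] {g : α → ℝ} {s : Set α} {M : ℝ}
    (hM : 0 < M) (hg : eVariationOn g s ≤ ENNReal.ofReal M) (hnonneg : ∃ x ∈ s, 0 ≤ g x)
    (hnonpos : ∃ x ∈ s, g x ≤ 0) :
    ∃ h ∈ (4 * M) • (unitMonotone α - unitMonotone α), EqOn g h s := by
  have hbv : BoundedVariationOn g s := ne_top_of_le_ne_top ENNReal.ofReal_ne_top hg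
  have hbound : ∀ t ∈ s, |g t| ≤ M := fun t => abs_le_of_eVariationOn_le hM.le hg hnonneg hnonpos
  obtain ⟨a, ha, -⟩ := hnonneg
  let V := variationOnFromTo g s a
  have hV : ∀ t ∈ s, |V t| ≤ M := fun t _ =>
    (variationOnFromTo.abs_le_eVariationOn hbv).trans (ENNReal.toReal_le_of_le_ofReal hM.le hg)
  have hmono : MonotoneOn V s := variationOnFromTo.monotoneOn hbv.locallyBoundedVariationOn ha
  have hmono' : MonotoneOn (V - g) s :=
    variationOnFromTo.sub_self_monotoneOn hbv.locallyBoundedVariationOn ha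
  have hV' : ∀ t ∈ s, |(V - g) t| ≤ 2 * M := fun t ht => by
    have := abs_sub (V t) (g t)
    simp only [Pi.sub_apply]
    linarith [hV t ht, hbound t ht]
  obtain ⟨f₁, hf₁, hVf₁⟩ := exists_unitMonotone_affine_eqOn hmono (C := 2 * M) (by positivity)
    fun t ht => (hV t ht).trans (by linarith)
  obtain ⟨f₂, hf₂, hVf₂⟩ := exists_unitMonotone_affine_eqOn hmono' (by positivity) hV'
  refine ⟨(4 * M) • (f₁ - f₂), smul_mem_smul_set (sub_mem_sub hf₁ hf₂), fun t ht => ?_⟩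
  have h₁ := hVf₁ ht
  have h₂ := hVf₂ ht
  simp only [Pi.smul_apply, Pi.sub_apply, smul_eq_mul] at h₁ h₂ ⊢
  linarith

theorem hasBracketCover_smul_unitMonotone_sub (Q : Measure ℝ) [IsProbabilityMeasure Q] {ε r : ℝ}
    (hε : 0 < ε) (hr : 0 < r) :
    HasBracketCover (lpBall 2 Q ε) (r • (unitMonotone ℝ - unitMonotone ℝ))
      (Real.exp (240 * r / ε)) := by
  have hδ : 0 < ε / (2 * r) := by positivity
  have hmono := hasBracketCover_lpBall_unitMonotone Q hδ
  refine ((hmono.sub hmono (Real.exp_pos _).le).smul hr.le).weaken (fun w hw _ _ => ?_) ?_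
  · have hw' := smul_lpBall_subset hr.le
      (smul_set_mono (lpBall_add_subset one_le_two hδ.le hδ.le) hw)
    have hradius : r * (ε / (2 * r) + ε / (2 * r)) = ε := by field_simp; norm_num
    rwa [hradius] at hw'
  · rw [← Real.exp_add]
    gcongr
    apply le_of_eq
    field_simp
    norm_num

theorem stmt_19_general :
    ∃ K > (0 : ℝ), ∀ (s : Set ℝ), ∀ M > (0 : ℝ), ∀ G : Set (ℝ → ℝ),
      (∀ g ∈ G, eVariationOn g s ≤ ENNReal.ofReal M ∧
        (∃ xbar ∈ s, 0 ≤ g xbar) ∧ (∃ xlow ∈ s, g xlow ≤ 0)) →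
      ∀ Q : Measure ℝ, IsProbabilityMeasure Q →
        ∀ ε > (0 : ℝ),
          ∃ N : ℕ, (N : ℝ) ≤ Real.exp (K * M / ε) ∧
            ∃ lu : Fin N → (ℝ → ℝ) × (ℝ → ℝ),
              (∀ j, (∫⁻ t, ENNReal.ofReal (((lu j).2 t - (lu j).1 t) ^ 2) ∂Q)
                ≤ ENNReal.ofReal (ε ^ 2)) ∧
              ∀ g ∈ G, ∃ j, ∀ t ∈ s,
                (lu j).1 t ≤ g t ∧ g t ≤ (lu j).2 t := by
  refine ⟨960, by norm_num, fun s M hM G hG Q _ ε hε => ?_⟩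
  obtain ⟨B, hcard, hwidth, hcover⟩ :=
    hasBracketCover_smul_unitMonotone_sub Q hε (r := 4 * M) (by positivity)
  refine ⟨B.card, hcard.trans_eq (by ring_nf), fun j => B.equivFin.symm j,
    fun j => ?_, fun g hg => ?_⟩
  · exact (eLpNorm_two_le_ofReal_iff hε.le).1 (hwidth _ (B.equivFin.symm j).2).2.2.2.2
  · obtain ⟨hvar, hnonneg, hnonpos⟩ := hG g hg
    obtain ⟨h, hh, hgh⟩ := exists_unitMonotone_sub_eqOn hM hvar hnonneg hnonpos
    obtain ⟨b, hb, hlh, hhu⟩ := hcover h hh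
    refine ⟨B.equivFin ⟨b, hb⟩, fun t ht => ?_⟩
    simp only [Equiv.symm_apply_apply, hgh ht]
    exact ⟨hlh t, hhu t⟩

end BoundedVariation

/-- bracketing entropy of classes of functions of uniformly
bounded variation.  There is a universal constant `K` (independent of the
class `G`, the bound `M` and the measure `Q`) such that any class `G` of
functions on `[a,b]` with `TV(g) ≤ M` and taking both a nonnegative and a
nonpositive value can be covered by at most `exp(K·M/ε)` brackets of
`L²(Q)`-width `ε`, for every probability measure `Q` on `[a,b]` and every
`ε > 0`. -/
theorem stmt_19 (a b : ℝ) (hab : a ≤ b) :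
    ∃ K > (0 : ℝ), ∀ M > (0 : ℝ), ∀ G : Set (ℝ → ℝ),
      (∀ g ∈ G, eVariationOn g (Icc a b) ≤ ENNReal.ofReal M ∧
        (∃ xbar ∈ Icc a b, 0 ≤ g xbar) ∧ (∃ xlow ∈ Icc a b, g xlow ≤ 0)) →
      ∀ Q : Measure ℝ, IsProbabilityMeasure Q → Q (Set.Icc a b)ᶜ = 0 →
        ∀ ε > (0 : ℝ),
          ∃ N : ℕ, (N : ℝ) ≤ Real.exp (K * M / ε) ∧
            ∃ lu : Fin N → (ℝ → ℝ) × (ℝ → ℝ),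
              (∀ j, (∫⁻ t, ENNReal.ofReal (((lu j).2 t - (lu j).1 t) ^ 2) ∂Q)
                ≤ ENNReal.ofReal (ε ^ 2)) ∧
              ∀ g ∈ G, ∃ j, ∀ t ∈ Icc a b,
                (lu j).1 t ≤ g t ∧ g t ≤ (lu j).2 t := by
  obtain ⟨K, hK, h⟩ := stmt_19_general
  exact ⟨K, hK, fun M hM G hG Q hQ _ => h (Icc a b) M hM G hG Q hQ⟩
end
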